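/- Bias of the debiased oblique projection (Theorem 3.2, first moment): There exist absolute constants C > 0 and C' > 0 such that the following holds. Let n ≥ p ≥ 1 with n ≥ 3, let X ∈ ℝ^{n×p} have Xᵀ X invertible and satisfy the row-norm condition with exponent α > 0, let π be a sampling distribution with π i > 0 and ℓ_i(X) < m · π i for all i, let 0 < δ ≤ n^{−(3+α)}, and assume m ≥ C · θ_max(X) · p · log(p/δ). Then there exists an event ζ ⊆ Ω with P(ζ) ≥ 1 − δ such that (Š(ω) X)ᵀ Š(ω) X is invertible for every ω ∈ ζ and, writing P̌(ω) = X ((Š(ω) X)ᵀ Š(ω) X)⁻¹ (Š(ω) X)ᵀ Š(ω), P = X (Xᵀ X)⁻¹ Xᵀ and P⊥ = I_n − P, one has ‖E_ζ[P̌] − P‖_F ≤ ε · ‖P⊥‖_F, where ε = C' · (log n / log log n) · √(θ_max(X)³ · p³ / m³). -/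

import Mathlib

/-!
Write `r = θ_max(X) p / m`. The bias of the debiased projection is `O(r^{3/2}) ‖P⊥‖_F`; since
`log n / log log n ≥ 1` this is stronger than the claim.

**Reduction.** Replace `X` by an orthonormal basis matrix `U` of its column space and put
`cᵢ = 1 / (m πᵢ - ℓᵢ)`, so that `ŠᵀŠ = ∑ₛ c_{ωₛ} e_{ωₛ} e_{ωₛ}ᵀ` and the sampled Gram matrix is
`G = ∑ₛ c_{ωₛ} u_{ωₛ} u_{ωₛ}ᵀ` (`sGram`). On the event `ζ = {G ⪰ I / 12}` (`goodEvent`) one has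
`P̌ - P = U G⁻¹ Uᵀ ŠᵀŠ (1 - U Uᵀ)`. Hence it suffices (`bias_bound`) to bound the bilinear form
`E[1_ζ ∑ₛ c_{ωₛ} ν_{ωₛ} u_{ωₛ}ᵀ G⁻¹ z]` for `ν` orthogonal to the range of `U`.

**Cancellation.** Separate the draw `i = ωₛ` and let `H` be the Gram matrix of the remaining
draws. By Sherman–Morrison the debiasing weights turn `m πᵢ cᵢ uᵢᵀ (H + cᵢ uᵢ uᵢᵀ)⁻¹ z` into
`uᵢᵀ H⁻¹ z / (1 + bᵢ)`, with `bᵢ = (uᵢᵀ H⁻¹ uᵢ - ℓᵢ) / (m πᵢ)` (`levErr`). The term of order zero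
in `bᵢ` vanishes because `Uᵀ ν = 0`, and the remainder is controlled by Cauchy–Schwarz
(`DebiasedData.main_pointwise`, `DebiasedData.good_part`) and by `E bᵢ² = O(r³)`
(`DebiasedData.levErr_sq`), which is a second-moment computation. The samples where `H` is
ill conditioned but `G` is not contribute `O(√P(H ill conditioned))` (`DebiasedData.bad_part`).

**Concentration.** The probability of an ill-conditioned Gram matrix is at most
`p exp(-1 / (24 r))` (`sampleExp_illInd_le`). This is a lower-tail matrix Chernoff bound, proved
without the Golden–Thompson or Lieb inequality: adding one rank-one term decreases `tr exp(-t G)`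
by at least a third of its first-order variation (`expTrace_step`), and averaging over the draw
gives a contraction of `E tr exp(-t G)` (`sampleExp_expTrace_le`). The hypothesis on `m` says
`48 r log(p / δ) ≤ 1`, which makes this probability at most `δ exp(-1 / (48 r)) = O(r³)`.
-/

open Matrix Finset

noncomputable section

/-- Probability of the i.i.d. sample `ω` of `m` draws from the sampling
distribution `π` (pmf of the product measure on `Ω = Fin m → Fin n`). -/
def samplingP {n : ℕ} (π : Fin n → ℝ) {m : ℕ} (ω : Fin m → Fin n) : ℝ :=
  ∏ s, π (ω s)

/-- The sampling matrix `S(ω) ∈ ℝ^{m×n}` with `S(ω)_{s,j} = 1/√(m π_{ω s})` if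
`j = ω s` and `0` otherwise. -/
def samplingS {n : ℕ} (π : Fin n → ℝ) {m : ℕ} (ω : Fin m → Fin n) :
    Matrix (Fin m) (Fin n) ℝ :=
  Matrix.of fun s j => if j = ω s then 1 / Real.sqrt (m * π (ω s)) else 0

/-- The `i`-th leverage score `ℓ_i(X) = x_iᵀ (Xᵀ X)⁻¹ x_i`. -/
def lev {n p : ℕ} (X : Matrix (Fin n) (Fin p) ℝ) (i : Fin n) : ℝ :=
  X i ⬝ᵥ ((Xᵀ * X)⁻¹ *ᵥ X i)

/-- Maximum importance sampling approximation factor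
`θ_max(X) = max_i ℓ_i(X)/(p π_i)`. -/
def thetaMax {n p : ℕ} (X : Matrix (Fin n) (Fin p) ℝ) (π : Fin n → ℝ) : ℝ :=
  ⨆ i, lev X i / (p * π i)

/-- Probability of an event `ζ` relative to the pmf `P`. -/
def eventProb {Ω : Type*} (P : Ω → ℝ) (ζ : Finset Ω) : ℝ :=
  ∑ ω ∈ ζ, P ω

/-- Conditional expectation `E_ζ[f] = P(ζ)⁻¹ ∑_{ω ∈ ζ} P(ω) f(ω)`. -/
def condExp {Ω V : Type*} [AddCommMonoid V] [Module ℝ V]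
    (P : Ω → ℝ) (ζ : Finset Ω) (f : Ω → V) : V :=
  (eventProb P ζ)⁻¹ • ∑ ω ∈ ζ, P ω • f ω

/-- Frobenius norm `‖A‖_F = √(trace (Aᵀ A))`. -/
def frobNorm {k l : ℕ} (A : Matrix (Fin k) (Fin l) ℝ) : ℝ :=
  Real.sqrt ((Aᵀ * A).trace)

/-- Loewner order: `A ⪯ B` iff `B − A` is positive semidefinite. -/
def loewnerLE {k : ℕ} (A B : Matrix (Fin k) (Fin k) ℝ) : Prop :=
  (B - A).PosSemidef

/-- Debiased sampling matrix
`Š(ω) = diag(1/√(1 − ℓ_{ω s}(X)/(m π_{ω s})))_{s} · S(ω)`. -/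
def samplingSdeb {n p : ℕ} (X : Matrix (Fin n) (Fin p) ℝ) (π : Fin n → ℝ) {m : ℕ}
    (ω : Fin m → Fin n) : Matrix (Fin m) (Fin n) ℝ :=
  Matrix.diagonal (fun s => 1 / Real.sqrt (1 - lev X (ω s) / (m * π (ω s)))) *
    samplingS π ω

/-- The orthogonal projection `P = X (Xᵀ X)⁻¹ Xᵀ` onto the column space of `X`. -/
def projX {n p : ℕ} (X : Matrix (Fin n) (Fin p) ℝ) : Matrix (Fin n) (Fin n) ℝ :=
  X * (Xᵀ * X)⁻¹ * Xᵀ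

/-- The debiased random oblique projection
`P̌(ω) = X ((Š(ω) X)ᵀ Š(ω) X)⁻¹ (Š(ω) X)ᵀ Š(ω)`. -/
def projDeb {n p : ℕ} (X : Matrix (Fin n) (Fin p) ℝ) (π : Fin n → ℝ) {m : ℕ}
    (ω : Fin m → Fin n) : Matrix (Fin n) (Fin n) ℝ :=
  X * ((samplingSdeb X π ω * X)ᵀ * (samplingSdeb X π ω * X))⁻¹ *
    (samplingSdeb X π ω * X)ᵀ * samplingSdeb X π ω

/-! ### Expectations over i.i.d. draws and the sampled Gram matrix -/

/-- Expectation of `f` under `k` i.i.d. draws from `π`. -/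
def sampleExp {n : ℕ} (π : Fin n → ℝ) (k : ℕ) (f : (Fin k → Fin n) → ℝ) : ℝ :=
  ∑ ω, samplingP π ω * f ω

/-- The weighted Gram matrix `∑ₛ c(ω s) u_{ω s} u_{ω s}ᵀ` of the sampled rows of `U`. -/
def sGram {n p : ℕ} (U : Matrix (Fin n) (Fin p) ℝ) (c : Fin n → ℝ) {k : ℕ}
    (ω : Fin k → Fin n) : Matrix (Fin p) (Fin p) ℝ :=
  ∑ s, c (ω s) • vecMulVec (U (ω s)) (U (ω s))

/-- The quadratic form of `G` is bounded below by `‖x‖² / 12`. -/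
def WellCond {p : ℕ} (G : Matrix (Fin p) (Fin p) ℝ) : Prop :=
  ∀ x : Fin p → ℝ, 1 / 12 * (x ⬝ᵥ x) ≤ x ⬝ᵥ (G *ᵥ x)

lemma samplingP_nonneg {n k : ℕ} {π : Fin n → ℝ} (h : ∀ i, 0 < π i) (ω : Fin k → Fin n) :
    0 ≤ samplingP π ω := Finset.prod_nonneg fun _ _ => (h _).le

/-- Fubini for the `s`-th draw. -/
lemma sampleExp_succ {n k : ℕ} (π : Fin n → ℝ) (s : Fin (k + 1))
    (f : (Fin (k + 1) → Fin n) → ℝ) :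
    sampleExp π (k + 1) f
      = ∑ i, π i * sampleExp π k (fun ω => f (s.insertNth (α := fun _ => Fin n) i ω)) := by
  unfold sampleExp samplingP
  rw [← (Fin.insertNthEquiv (fun _ => Fin n) s).sum_comp, Fintype.sum_prod_type]
  refine Finset.sum_congr rfl fun i _ => ?_
  rw [Finset.mul_sum]
  refine Finset.sum_congr rfl fun ω _ => ?_
  simp [Fin.insertNthEquiv, Fin.prod_univ_succAbove _ s, mul_assoc]

lemma sampleExp_one {n : ℕ} {π : Fin n → ℝ} (h : ∑ i, π i = 1) (k : ℕ) :
    sampleExp π k (fun _ => 1) = 1 := by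
  induction k with
  | zero => simp [sampleExp, samplingP]
  | succ k ih => rw [sampleExp_succ π 0]; simp [ih, h]

lemma sampleExp_mono {n k : ℕ} {π : Fin n → ℝ} (h : ∀ i, 0 < π i)
    {f g : (Fin k → Fin n) → ℝ} (hfg : ∀ ω, f ω ≤ g ω) :
    sampleExp π k f ≤ sampleExp π k g :=
  Finset.sum_le_sum fun ω _ => mul_le_mul_of_nonneg_left (hfg ω) (samplingP_nonneg h ω)

lemma sampleExp_mul_left {n k : ℕ} (π : Fin n → ℝ) (a : ℝ) (f : (Fin k → Fin n) → ℝ) :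
    sampleExp π k (fun ω => a * f ω) = a * sampleExp π k f := by
  simp only [sampleExp, Finset.mul_sum]
  exact Finset.sum_congr rfl fun ω _ => by ring

lemma sGram_insertNth {n p k : ℕ} (U : Matrix (Fin n) (Fin p) ℝ) (c : Fin n → ℝ)
    (s : Fin (k + 1)) (i : Fin n) (ω : Fin k → Fin n) :
    sGram U c (s.insertNth (α := fun _ => Fin n) i ω)
      = c i • vecMulVec (U i) (U i) + sGram U c ω := by
  simp [sGram, Fin.sum_univ_succAbove _ s]

lemma rankOne_mulVec {p : ℕ} (a : ℝ) (u x : Fin p → ℝ) :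
    (a • vecMulVec u u) *ᵥ x = (a * (u ⬝ᵥ x)) • u := by
  ext j
  simp [Matrix.smul_mulVec, vecMulVec_mulVec, mul_comm, mul_left_comm]

lemma sGram_mulVec {n p k : ℕ} (U : Matrix (Fin n) (Fin p) ℝ) (c : Fin n → ℝ)
    (ω : Fin k → Fin n) (x : Fin p → ℝ) :
    sGram U c ω *ᵥ x = ∑ s, (c (ω s) * (U (ω s) ⬝ᵥ x)) • U (ω s) := by
  simp only [sGram, Matrix.sum_mulVec, rankOne_mulVec]

lemma sGram_quad {n p k : ℕ} (U : Matrix (Fin n) (Fin p) ℝ) (c : Fin n → ℝ)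
    (ω : Fin k → Fin n) (x : Fin p → ℝ) :
    x ⬝ᵥ (sGram U c ω *ᵥ x) = ∑ s, c (ω s) * (U (ω s) ⬝ᵥ x) ^ 2 := by
  rw [sGram_mulVec, dotProduct_sum]
  refine Finset.sum_congr rfl fun s _ => ?_
  rw [dotProduct_smul, dotProduct_comm x, smul_eq_mul]; ring

lemma sGram_transpose {n p k : ℕ} (U : Matrix (Fin n) (Fin p) ℝ) (c : Fin n → ℝ)
    (ω : Fin k → Fin n) : (sGram U c ω)ᵀ = sGram U c ω := by
  simp [sGram, Matrix.transpose_sum, transpose_vecMulVec]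

lemma sGram_isHermitian {n p k : ℕ} (U : Matrix (Fin n) (Fin p) ℝ) (c : Fin n → ℝ)
    (ω : Fin k → Fin n) : (sGram U c ω).IsHermitian := by
  rw [Matrix.IsHermitian, conjTranspose_eq_transpose_of_trivial, sGram_transpose]

/-! ### The trace exponential under rank-one updates -/

/-- Coordinates of the `i`-th eigenvector. -/
def eigVec {p : ℕ} {A : Matrix (Fin p) (Fin p) ℝ} (hA : A.IsHermitian) (i : Fin p) :
    Fin p → ℝ := hA.eigenvectorBasis i

lemma eigVec_parseval {p : ℕ} {A : Matrix (Fin p) (Fin p) ℝ} (hA : A.IsHermitian)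
    (x y : Fin p → ℝ) : ∑ i, (eigVec hA i ⬝ᵥ x) * (eigVec hA i ⬝ᵥ y) = x ⬝ᵥ y := by
  have := hA.eigenvectorBasis.sum_inner_mul_inner (WithLp.toLp 2 x) (WithLp.toLp 2 y)
  simp only [EuclideanSpace.inner_eq_star_dotProduct] at this
  simp only [star_trivial] at this
  rw [dotProduct_comm x y, ← this]
  refine Finset.sum_congr rfl fun i _ => ?_
  rw [eigVec, dotProduct_comm _ y]

lemma eigVec_mulVec {p : ℕ} {A : Matrix (Fin p) (Fin p) ℝ} (hA : A.IsHermitian) (i : Fin p) :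
    A *ᵥ eigVec hA i = hA.eigenvalues i • eigVec hA i := hA.mulVec_eigenvectorBasis i

lemma eigVec_self {p : ℕ} {A : Matrix (Fin p) (Fin p) ℝ} (hA : A.IsHermitian) (i : Fin p) :
    eigVec hA i ⬝ᵥ eigVec hA i = 1 := by
  have := hA.eigenvectorBasis.orthonormal.1 i
  have h2 := real_inner_self_eq_norm_sq (hA.eigenvectorBasis i)
  rw [this, EuclideanSpace.inner_eq_star_dotProduct] at h2
  simpa [eigVec] using h2

/-- `tr exp(-t A)`, written through the eigenvalues of `A`. -/
def expTrace {p : ℕ} (t : ℝ) {A : Matrix (Fin p) (Fin p) ℝ} (hA : A.IsHermitian) : ℝ :=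
  ∑ i, Real.exp (-t * hA.eigenvalues i)

/-- Taylor's bound of order two with the remainder averaged over both endpoints, valid for `u` of
either sign. -/
lemma exp_taylor_bound (u : ℝ) : Real.exp u ≤ 1 + u + u ^ 2 / 2 * (1 + Real.exp u) := by
  rcases le_total 0 u with h | h
  · by_cases h2 : u ≤ 2
    · have h1 := Real.add_one_le_exp (-(u / 2))
      have h3 : Real.exp (-u) = Real.exp (-(u / 2)) ^ 2 := by
        rw [← Real.exp_nat_mul]; ring_nf
      have h4 : (1 - u / 2) ^ 2 ≤ Real.exp (-u) := by
        rw [h3]; exact pow_le_pow_left₀ (by linarith) (by linarith) 2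
      have h5 : 1 - u ^ 2 / 2 ≤ (1 + u + u ^ 2 / 2) * Real.exp (-u) := by
        nlinarith [mul_le_mul_of_nonneg_left h4 (by positivity : 0 ≤ 1 + u + u ^ 2 / 2),
          mul_nonneg (sq_nonneg u) (sq_nonneg (u - 1)), sq_nonneg u]
      have h6 := mul_le_mul_of_nonneg_right h5 (Real.exp_pos u).le
      rw [mul_assoc, ← Real.exp_add, neg_add_cancel, Real.exp_zero] at h6
      linarith
    · push Not at h2
      nlinarith [Real.exp_pos u, mul_pos (Real.exp_pos u) (by nlinarith : 0 < u ^ 2 - 2)]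
  · have h1 := Real.quadratic_le_exp_of_nonneg (neg_nonneg.2 h)
    have h2 : 1 ≤ (1 + u + u ^ 2 / 2) * Real.exp (-u) + u ^ 2 / 2 := by
      nlinarith [mul_le_mul_of_nonneg_left h1 (by nlinarith [sq_nonneg (u + 1)] :
        0 ≤ 1 + u + u ^ 2 / 2), sq_nonneg (u ^ 2)]
    have h6 := mul_le_mul_of_nonneg_right h2 (Real.exp_pos u).le
    rw [add_mul, mul_assoc, ← Real.exp_add, neg_add_cancel, Real.exp_zero] at h6
    linarith

/-- A rank-one update lowers `tr exp(-t A)` by at least a third of the first-order term `Y_A`.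
In the eigenbases of `A` and `B`, convexity of `exp` (Klein's inequality) bounds the decrease below
by the analogous term `Y_B`, and the second-order expansion bounds it below by
`Y_A - (Y_A + Y_B) / 2`; twice the second bound plus the first bounds
`Y_A` by three times the decrease. -/
lemma expTrace_step {p : ℕ} {t : ℝ} {A B : Matrix (Fin p) (Fin p) ℝ}
    (hA : A.IsHermitian) (hB : B.IsHermitian) {a : ℝ} {u : Fin p → ℝ} (ht : 0 ≤ t) (ha : 0 ≤ a)
    (hBA : B = a • vecMulVec u u + A) (hu : t * (a * (u ⬝ᵥ u)) ≤ 1) :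
    expTrace t hB ≤ expTrace t hA
      - 1 / 3 * ∑ i, t * a * Real.exp (-t * hA.eigenvalues i) * (eigVec hA i ⬝ᵥ u) ^ 2 := by
  set e := eigVec hA
  set f := eigVec hB
  set α := hA.eigenvalues
  set β := hB.eigenvalues
  -- the doubly stochastic weights comparing the two eigenbases
  set w : Fin p → Fin p → ℝ := fun i j => (e i ⬝ᵥ f j) ^ 2 with hw
  have hw0 : ∀ i j, 0 ≤ w i j := fun i j => sq_nonneg _
  have row : ∀ i, ∑ j, w i j = 1 := fun i => by
    rw [← eigVec_self hA i, ← eigVec_parseval hB]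
    exact Finset.sum_congr rfl fun j _ => by simp only [hw, dotProduct_comm (e i)]; ring_nf; rfl
  have col : ∀ j, ∑ i, w i j = 1 := fun j => by
    rw [← eigVec_self hB j, ← eigVec_parseval hA]
    exact Finset.sum_congr rfl fun i _ => by simp only [hw]; ring_nf; rfl
  -- the matrix entries of `B - A` between the two eigenbases
  have key : ∀ i j, (β j - α i) * (e i ⬝ᵥ f j) = a * (e i ⬝ᵥ u) * (f j ⬝ᵥ u) := fun i j => by
    have h1 : e i ⬝ᵥ (B *ᵥ f j) = β j * (e i ⬝ᵥ f j) := by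
      rw [eigVec_mulVec hB, dotProduct_smul, smul_eq_mul]
    have h2 : e i ⬝ᵥ (A *ᵥ f j) = α i * (e i ⬝ᵥ f j) := by
      have hAt : Aᵀ = A := by
        have := hA.eq
        rwa [conjTranspose_eq_transpose_of_trivial] at this
      rw [dotProduct_mulVec, ← mulVec_transpose, hAt, eigVec_mulVec hA, smul_dotProduct,
        smul_eq_mul]
    rw [hBA, add_mulVec, dotProduct_add, rankOne_mulVec, dotProduct_smul, h2, smul_eq_mul,
      dotProduct_comm u] at h1
    linarith
  have lin_row : ∀ i, ∑ j, w i j * (β j - α i) = a * (e i ⬝ᵥ u) ^ 2 := fun i => by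
    have : ∀ j, w i j * (β j - α i) = a * (e i ⬝ᵥ u) * ((f j ⬝ᵥ e i) * (f j ⬝ᵥ u)) := fun j => by
      simp only [hw]
      rw [dotProduct_comm (f j) (e i)]
      linear_combination (e i ⬝ᵥ f j) * key i j
    simp only [this]
    rw [← Finset.mul_sum, eigVec_parseval hB]; ring
  have lin_col : ∀ j, ∑ i, w i j * (β j - α i) = a * (f j ⬝ᵥ u) ^ 2 := fun j => by
    have : ∀ i, w i j * (β j - α i) = a * (f j ⬝ᵥ u) * ((e i ⬝ᵥ f j) * (e i ⬝ᵥ u)) := fun i => by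
      simp only [hw]
      linear_combination (e i ⬝ᵥ f j) * key i j
    simp only [this]
    rw [← Finset.mul_sum, eigVec_parseval hA]; ring
  have sq_row : ∀ i, ∑ j, w i j * (β j - α i) ^ 2 = a ^ 2 * (u ⬝ᵥ u) * (e i ⬝ᵥ u) ^ 2 :=
    fun i => by
    have : ∀ j, w i j * (β j - α i) ^ 2
        = a ^ 2 * (e i ⬝ᵥ u) ^ 2 * ((f j ⬝ᵥ u) * (f j ⬝ᵥ u)) := fun j => by
      simp only [hw]
      rw [← mul_pow, mul_comm, key]; ring
    simp only [this]
    rw [← Finset.mul_sum, eigVec_parseval hB]; ring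
  have sq_col : ∀ j, ∑ i, w i j * (β j - α i) ^ 2 = a ^ 2 * (u ⬝ᵥ u) * (f j ⬝ᵥ u) ^ 2 :=
    fun j => by
    have : ∀ i, w i j * (β j - α i) ^ 2
        = a ^ 2 * (f j ⬝ᵥ u) ^ 2 * ((e i ⬝ᵥ u) * (e i ⬝ᵥ u)) := fun i => by
      simp only [hw]
      rw [← mul_pow, mul_comm, key]; ring
    simp only [this]
    rw [← Finset.mul_sum, eigVec_parseval hA]; ring
  set E : Fin p → ℝ := fun i => Real.exp (-t * α i) with hE
  set F : Fin p → ℝ := fun j => Real.exp (-t * β j) with hF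
  set YA := ∑ i, t * a * E i * (e i ⬝ᵥ u) ^ 2 with hYA
  set YB := ∑ j, t * a * F j * (f j ⬝ᵥ u) ^ 2 with hYB
  have TA : expTrace t hA = ∑ i, ∑ j, w i j * E i := by
    simp only [← Finset.sum_mul, row, one_mul]; rfl
  have TB' : expTrace t hB = ∑ j, ∑ i, w i j * F j := by
    simp only [← Finset.sum_mul, col, one_mul]; rfl
  have TB : expTrace t hB = ∑ i, ∑ j, w i j * F j := by rw [TB', Finset.sum_comm]
  have sYA : ∑ i, ∑ j, w i j * (t * (β j - α i) * E i) = YA := by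
    refine Finset.sum_congr rfl fun i _ => ?_
    have : ∀ j, w i j * (t * (β j - α i) * E i) = t * E i * (w i j * (β j - α i)) :=
      fun j => by ring
    simp only [this]
    rw [← Finset.mul_sum, lin_row]; ring
  have sYB : ∑ i, ∑ j, w i j * (t * (β j - α i) * F j) = YB := by
    rw [Finset.sum_comm]
    refine Finset.sum_congr rfl fun j _ => ?_
    have : ∀ i, w i j * (t * (β j - α i) * F j) = t * F j * (w i j * (β j - α i)) :=
      fun i => by ring
    simp only [this]
    rw [← Finset.mul_sum, lin_col]; ring
  have qA : ∑ i, ∑ j, w i j * ((t * (β j - α i)) ^ 2 * E i) ≤ YA := by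
    refine Finset.sum_le_sum fun i _ => ?_
    have : ∀ j, w i j * ((t * (β j - α i)) ^ 2 * E i) = t ^ 2 * E i * (w i j * (β j - α i) ^ 2) :=
      fun j => by ring
    simp only [this]
    rw [← Finset.mul_sum, sq_row]
    have h0 : 0 ≤ t * a * E i * (e i ⬝ᵥ u) ^ 2 := by positivity
    nlinarith [mul_le_mul_of_nonneg_left hu h0]
  have qB : ∑ i, ∑ j, w i j * ((t * (β j - α i)) ^ 2 * F j) ≤ YB := by
    rw [Finset.sum_comm]
    refine Finset.sum_le_sum fun j _ => ?_
    have : ∀ i, w i j * ((t * (β j - α i)) ^ 2 * F j) = t ^ 2 * F j * (w i j * (β j - α i) ^ 2) :=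
      fun i => by ring
    simp only [this]
    rw [← Finset.mul_sum, sq_col]
    have h0 : 0 ≤ t * a * F j * (f j ⬝ᵥ u) ^ 2 := by positivity
    nlinarith [mul_le_mul_of_nonneg_left hu h0]
  have klein : YB ≤ expTrace t hA - expTrace t hB := by
    rw [TA, TB, ← sYB, ← Finset.sum_sub_distrib]
    refine Finset.sum_le_sum fun i _ => ?_
    rw [← Finset.sum_sub_distrib]
    refine Finset.sum_le_sum fun j _ => ?_
    rw [← mul_sub]
    refine mul_le_mul_of_nonneg_left ?_ (hw0 i j)
    have h1 := Real.add_one_le_exp (t * (β j - α i))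
    have h2 : E i = Real.exp (t * (β j - α i)) * F j := by
      simp only [hE, hF, ← Real.exp_add]; ring_nf
    rw [h2]
    nlinarith [Real.exp_pos (-t * β j)]
  have second : expTrace t hB ≤ expTrace t hA - YA + 1 / 2 * (YA + YB) := by
    refine le_trans ?_ (add_le_add_right (mul_le_mul_of_nonneg_left (add_le_add qA qB)
      (by norm_num : (0:ℝ) ≤ 1 / 2)) _)
    rw [TA, TB, ← sYA]
    simp only [← Finset.sum_sub_distrib, ← Finset.sum_add_distrib, Finset.mul_sum]
    refine Finset.sum_le_sum fun i _ => Finset.sum_le_sum fun j _ => ?_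
    have h2 : F j = Real.exp (-(t * (β j - α i))) * E i := by
      simp only [hE, hF, ← Real.exp_add]; ring_nf
    have h1 := mul_le_mul_of_nonneg_right (exp_taylor_bound (-(t * (β j - α i))))
      (Real.exp_pos (-t * α i)).le
    have h3 : F j ≤ E i - t * (β j - α i) * E i
        + 1 / 2 * ((t * (β j - α i)) ^ 2 * E i + (t * (β j - α i)) ^ 2 * F j) := by
      rw [h2]; simp only [hE] at h1 ⊢; linarith
    nlinarith [mul_le_mul_of_nonneg_left h3 (hw0 i j)]
  linarith

/-! ### Matrix Chernoff lower tail -/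

lemma dotProduct_self_nonneg' {p : ℕ} (x : Fin p → ℝ) : 0 ≤ x ⬝ᵥ x :=
  Finset.sum_nonneg fun i _ => mul_self_nonneg (x i)

lemma dotProduct_sq_le {p : ℕ} (x y : Fin p → ℝ) : (x ⬝ᵥ y) ^ 2 ≤ (x ⬝ᵥ x) * (y ⬝ᵥ y) := by
  simpa [dotProduct, sq] using Finset.sum_mul_sq_le_sq_mul_sq Finset.univ x y

lemma row_parseval {n p : ℕ} {U : Matrix (Fin n) (Fin p) ℝ} (hU : Uᵀ * U = 1)
    (x y : Fin p → ℝ) : ∑ i, (U i ⬝ᵥ x) * (U i ⬝ᵥ y) = x ⬝ᵥ y := by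
  have : (U *ᵥ x) ⬝ᵥ (U *ᵥ y) = x ⬝ᵥ y := by
    rw [dotProduct_mulVec, ← mulVec_transpose, mulVec_mulVec, hU, one_mulVec]
  exact this

lemma sampleExp_sum {n k : ℕ} (π : Fin n → ℝ) {ι : Type*} (s : Finset ι)
    (f : ι → (Fin k → Fin n) → ℝ) :
    sampleExp π k (fun ω => ∑ i ∈ s, f i ω) = ∑ i ∈ s, sampleExp π k (f i) := by
  simp only [sampleExp, Finset.mul_sum]
  exact Finset.sum_comm

lemma sampleExp_const {n : ℕ} {π : Fin n → ℝ} (h : ∑ i, π i = 1) (k : ℕ) (a : ℝ) :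
    sampleExp π k (fun _ => a) = a := by
  have := sampleExp_mul_left (k := k) π a (fun _ => 1)
  rw [sampleExp_one h] at this
  simpa using this

/-- Averaging `expTrace_step` over the new draw contracts the expected trace exponential, because
the sampled rank-one terms dominate `b` times the identity on average. -/
lemma sampleExp_expTrace_le {n p : ℕ} {π c : Fin n → ℝ} {U : Matrix (Fin n) (Fin p) ℝ}
    {t b : ℝ} (hπ : ∀ i, 0 < π i) (hπ1 : ∑ i, π i = 1) (hU : Uᵀ * U = 1) (ht : 0 ≤ t)
    (hc0 : ∀ i, 0 ≤ c i) (hc : ∀ i, b ≤ π i * c i) (htc : ∀ i, t * (c i * (U i ⬝ᵥ U i)) ≤ 1)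
    (htb : t * b / 3 ≤ 1) (k : ℕ) :
    sampleExp π k (fun ω => expTrace t (sGram_isHermitian U c ω)) ≤ p * (1 - t * b / 3) ^ k := by
  induction k with
  | zero =>
    have h0 : ∀ ω : Fin 0 → Fin n, expTrace t (sGram_isHermitian U c ω) = p := fun ω => by
      have hz : (sGram_isHermitian U c ω).eigenvalues = 0 := by
        rw [Matrix.IsHermitian.eigenvalues_eq_zero_iff]; simp [sGram]
      simp [expTrace, hz]
    simp only [h0]
    rw [sampleExp_const hπ1]; simp
  | succ k ih =>
    rw [sampleExp_succ π 0]
    simp only [← sampleExp_mul_left]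
    rw [← sampleExp_sum]
    have step : ∀ ω : Fin k → Fin n,
        ∑ i, π i * expTrace t (sGram_isHermitian U c
          ((0 : Fin (k + 1)).insertNth (α := fun _ => Fin n) i ω))
        ≤ (1 - t * b / 3) * expTrace t (sGram_isHermitian U c ω) := fun ω => by
      set hA := sGram_isHermitian U c ω
      have h1 : ∀ i, expTrace t (sGram_isHermitian U c
          ((0 : Fin (k + 1)).insertNth (α := fun _ => Fin n) i ω)) ≤ _ := fun i =>
        expTrace_step hA (sGram_isHermitian U c
          ((0 : Fin (k + 1)).insertNth (α := fun _ => Fin n) i ω)) ht (hc0 i)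
          (sGram_insertNth U c 0 i ω) (htc i)
      refine (Finset.sum_le_sum fun i _ => mul_le_mul_of_nonneg_left (h1 i) (hπ i).le).trans ?_
      simp only [mul_sub, Finset.sum_sub_distrib]
      rw [← Finset.sum_mul, hπ1]
      have h2 : b * t * expTrace t hA ≤ ∑ i, π i * ∑ j,
          t * c i * Real.exp (-t * hA.eigenvalues j) * (eigVec hA j ⬝ᵥ U i) ^ 2 := by
        simp only [Finset.mul_sum]
        rw [Finset.sum_comm, expTrace, Finset.mul_sum]
        refine Finset.sum_le_sum fun j _ => ?_
        have h3 : ∑ i, (eigVec hA j ⬝ᵥ U i) ^ 2 = 1 := by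
          rw [← eigVec_self hA j, ← row_parseval hU]
          exact Finset.sum_congr rfl fun i _ => by rw [sq, dotProduct_comm]
        rw [← mul_one (b * t * _), ← h3, Finset.mul_sum]
        refine Finset.sum_le_sum fun i _ => ?_
        have h4 : 0 ≤ t * Real.exp (-t * hA.eigenvalues j) * (eigVec hA j ⬝ᵥ U i) ^ 2 := by
          positivity
        nlinarith [mul_le_mul_of_nonneg_right (hc i) h4]
      have h5 : ∑ i, π i * (1 / 3 * ∑ j,
          t * c i * Real.exp (-t * hA.eigenvalues j) * (eigVec hA j ⬝ᵥ U i) ^ 2)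
          = 1 / 3 * ∑ i, π i * ∑ j,
          t * c i * Real.exp (-t * hA.eigenvalues j) * (eigVec hA j ⬝ᵥ U i) ^ 2 := by
        rw [Finset.mul_sum]; exact Finset.sum_congr rfl fun i _ => by ring
      rw [h5]
      linarith
    refine (sampleExp_mono hπ step).trans ?_
    rw [sampleExp_mul_left, pow_succ]
    nlinarith [mul_le_mul_of_nonneg_left ih (by linarith : 0 ≤ 1 - t * b / 3)]

/-- If all eigenvalues are at least `1/12`, so is the quadratic form. -/
lemma wellCond_of_eigenvalues {p : ℕ} {A : Matrix (Fin p) (Fin p) ℝ} (hA : A.IsHermitian)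
    (h : ∀ i, 1 / 12 ≤ hA.eigenvalues i) : WellCond A := by
  intro x
  have hAt : Aᵀ = A := by
    have := hA.eq
    rwa [conjTranspose_eq_transpose_of_trivial] at this
  rw [← eigVec_parseval hA x x, ← eigVec_parseval hA x (A *ᵥ x), Finset.mul_sum]
  refine Finset.sum_le_sum fun i _ => ?_
  have : eigVec hA i ⬝ᵥ (A *ᵥ x) = hA.eigenvalues i * (eigVec hA i ⬝ᵥ x) := by
    rw [dotProduct_mulVec, ← mulVec_transpose, hAt, eigVec_mulVec, smul_dotProduct, smul_eq_mul]
  rw [this]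
  nlinarith [mul_le_mul_of_nonneg_right (h i) (mul_self_nonneg (eigVec hA i ⬝ᵥ x))]

open Classical in
/-- Indicator of an ill-conditioned matrix. -/
def illInd {p : ℕ} (G : Matrix (Fin p) (Fin p) ℝ) : ℝ := if WellCond G then 0 else 1

lemma illInd_nonneg {p : ℕ} (G : Matrix (Fin p) (Fin p) ℝ) : 0 ≤ illInd G := by
  unfold illInd; split_ifs <;> norm_num

lemma illInd_le_expTrace {p : ℕ} {t : ℝ} (ht : 0 ≤ t) {A : Matrix (Fin p) (Fin p) ℝ}
    (hA : A.IsHermitian) : illInd A ≤ Real.exp (t / 12) * expTrace t hA := by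
  unfold illInd
  split_ifs with h
  · unfold expTrace; positivity
  · have : ∃ i, hA.eigenvalues i < 1 / 12 := by
      by_contra! h2; exact h (wellCond_of_eigenvalues hA h2)
    obtain ⟨i, hi⟩ := this
    have h1 : Real.exp (-t * hA.eigenvalues i) ≤ expTrace t hA :=
      Finset.single_le_sum (f := fun i => Real.exp (-t * hA.eigenvalues i))
        (fun j _ => (Real.exp_pos _).le) (Finset.mem_univ i)
    refine le_trans ?_ (mul_le_mul_of_nonneg_left h1 (Real.exp_pos _).le)
    rw [← Real.exp_add]
    apply Real.one_le_exp
    nlinarith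

/-- Lower-tail matrix Chernoff bound for the weighted Gram matrix. -/
lemma sampleExp_illInd_le {n p : ℕ} {π c : Fin n → ℝ} {U : Matrix (Fin n) (Fin p) ℝ}
    {t b : ℝ} (hπ : ∀ i, 0 < π i) (hπ1 : ∑ i, π i = 1) (hU : Uᵀ * U = 1) (ht : 0 ≤ t)
    (hc0 : ∀ i, 0 ≤ c i) (hc : ∀ i, b ≤ π i * c i) (htc : ∀ i, t * (c i * (U i ⬝ᵥ U i)) ≤ 1)
    (htb : t * b / 3 ≤ 1) (k : ℕ) (hk : 1 / 2 ≤ b * k) :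
    sampleExp π k (fun ω => illInd (sGram U c ω)) ≤ p * Real.exp (-(t / 12)) := by
  refine (sampleExp_mono hπ fun ω => illInd_le_expTrace ht (sGram_isHermitian U c ω)).trans ?_
  rw [sampleExp_mul_left]
  have h1 := sampleExp_expTrace_le hπ hπ1 hU ht hc0 hc htc htb k
  have h2 : (1 - t * b / 3) ^ k ≤ Real.exp (-(t / 6)) := by
    calc (1 - t * b / 3) ^ k ≤ Real.exp (-(t * b / 3)) ^ k :=
          pow_le_pow_left₀ (by linarith) (by linarith [Real.add_one_le_exp (-(t * b / 3))]) k
      _ = Real.exp (-(t * (b * k) / 3)) := by rw [← Real.exp_nat_mul]; ring_nf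
      _ ≤ _ := Real.exp_le_exp.2 (by nlinarith)
  calc Real.exp (t / 12) * _ ≤ Real.exp (t / 12) * (p * Real.exp (-(t / 6))) := by
        gcongr; exact h1.trans (by gcongr)
    _ = p * (Real.exp (t / 12) * Real.exp (-(t / 6))) := by ring
    _ = _ := by rw [← Real.exp_add]; ring_nf

/-- Second moment of a sum of i.i.d. vectors about an arbitrary centre `y`. -/
lemma sampleExp_sum_sub_sq {n p : ℕ} {π : Fin n → ℝ} (hπ1 : ∑ i, π i = 1)
    (ξ : Fin n → Fin p → ℝ) (k : ℕ) (y : Fin p → ℝ) :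
    sampleExp π k (fun ω => (∑ s, ξ (ω s) - y) ⬝ᵥ (∑ s, ξ (ω s) - y))
      = k * ∑ i, π i * (ξ i ⬝ᵥ ξ i)
        + k * (k - 1) * ((∑ i, π i • ξ i) ⬝ᵥ (∑ i, π i • ξ i))
        - 2 * k * ((∑ i, π i • ξ i) ⬝ᵥ y) + y ⬝ᵥ y := by
  set μ := ∑ i, π i • ξ i with hμ
  have hμz : ∀ z, ∑ i, π i * (ξ i ⬝ᵥ z) = μ ⬝ᵥ z := fun z => by
    rw [hμ, sum_dotProduct]; simp only [smul_dotProduct, smul_eq_mul]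
  induction k generalizing y with
  | zero => simp [sampleExp_const hπ1]
  | succ k ih =>
    rw [sampleExp_succ π 0]
    have h1 : ∀ (i : Fin n) (ω : Fin k → Fin n),
        ∑ s, ξ ((0 : Fin (k + 1)).insertNth (α := fun _ => Fin n) i ω s) - y
          = ∑ s, ξ (ω s) - (y - ξ i) := fun i ω => by
      simp [Fin.sum_univ_succ]; abel
    simp only [h1, ih]
    have h2 : ∀ i, π i * (k * ∑ i, π i * (ξ i ⬝ᵥ ξ i) + k * (k - 1) * (μ ⬝ᵥ μ)
        - 2 * k * (μ ⬝ᵥ (y - ξ i)) + (y - ξ i) ⬝ᵥ (y - ξ i))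
        = π i * (k * ∑ i, π i * (ξ i ⬝ᵥ ξ i) + k * (k - 1) * (μ ⬝ᵥ μ)
          - 2 * k * (μ ⬝ᵥ y) + y ⬝ᵥ y) + 2 * k * (π i * (ξ i ⬝ᵥ μ)) - 2 * (π i * (ξ i ⬝ᵥ y))
          + π i * (ξ i ⬝ᵥ ξ i) := fun i => by
      simp only [dotProduct_sub, sub_dotProduct]
      rw [dotProduct_comm y (ξ i), dotProduct_comm μ (ξ i)]; ring
    simp only [h2, Finset.sum_add_distrib, Finset.sum_sub_distrib, ← Finset.mul_sum,
      ← Finset.sum_mul, hπ1, hμz]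
    push_cast; ring

/-! ### Leave-one-out analysis -/

/-- The debiased weights `c i = 1 / (m π i - ℓ i)` of an orthonormal basis matrix `U`, with all
relative leverage scores `ℓ i / (m π i)` at most `r`. -/
structure DebiasedData {n p : ℕ} (U : Matrix (Fin n) (Fin p) ℝ) (π c : Fin n → ℝ) (k : ℕ)
    (r : ℝ) : Prop where
  orth : Uᵀ * U = 1
  pos : ∀ i, 0 < π i
  sum_one : ∑ i, π i = 1
  lev_le : ∀ i, U i ⬝ᵥ U i ≤ r * (((k : ℝ) + 1) * π i)
  weight : ∀ i, c i = (((k : ℝ) + 1) * π i - U i ⬝ᵥ U i)⁻¹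
  r_pos : 0 < r
  r_le : r ≤ 1 / 2
  inv_le : 1 ≤ r * ((k : ℝ) + 1)

namespace DebiasedData

variable {n p : ℕ} {U : Matrix (Fin n) (Fin p) ℝ} {π c : Fin n → ℝ} {k : ℕ} {r : ℝ}

lemma m_pos (_ : DebiasedData U π c k r) : (0 : ℝ) < (k : ℝ) + 1 := by positivity

lemma denom_pos (h : DebiasedData U π c k r) (i : Fin n) :
    0 < ((k : ℝ) + 1) * π i - U i ⬝ᵥ U i := by
  have h1 := h.lev_le i
  have h2 := mul_pos h.m_pos (h.pos i)
  nlinarith [h.r_le]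

lemma weight_mul (h : DebiasedData U π c k r) (i : Fin n) :
    c i * (((k : ℝ) + 1) * π i - U i ⬝ᵥ U i) = 1 := by
  rw [h.weight, inv_mul_cancel₀ (h.denom_pos i).ne']

lemma weight_pos (h : DebiasedData U π c k r) (i : Fin n) : 0 < c i := by
  rw [h.weight]; exact inv_pos.2 (h.denom_pos i)

lemma one_le (h : DebiasedData U π c k r) (i : Fin n) : 1 ≤ ((k : ℝ) + 1) * π i * c i := by
  have h1 := h.weight_mul i
  have h2 := mul_nonneg (h.weight_pos i).le (dotProduct_self_nonneg' (U i))
  linarith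

lemma le_two (h : DebiasedData U π c k r) (i : Fin n) : ((k : ℝ) + 1) * π i * c i ≤ 2 := by
  have h1 := h.weight_mul i
  have h2 := mul_le_mul_of_nonneg_left (h.lev_le i) (h.weight_pos i).le
  have h3 := mul_pos (mul_pos h.m_pos (h.pos i)) (h.weight_pos i)
  nlinarith [h.r_le]

lemma le_one_add (h : DebiasedData U π c k r) (i : Fin n) :
    ((k : ℝ) + 1) * π i * c i ≤ 1 + 2 * r := by
  have h1 := h.weight_mul i
  have h2 := mul_le_mul_of_nonneg_left (h.lev_le i) (h.weight_pos i).le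
  have h3 := mul_le_mul_of_nonneg_left (h.le_two i) h.r_pos.le
  linarith

lemma weight_lev (h : DebiasedData U π c k r) (i : Fin n) : c i * (U i ⬝ᵥ U i) ≤ 2 * r := by
  linarith [h.weight_mul i, h.le_one_add i]

/-- Mean-square error of the sampled Gram matrix along a fixed vector. -/
lemma gram_sub_sq (h : DebiasedData U π c k r) (v : Fin p → ℝ) :
    sampleExp π k (fun ω => (sGram U c ω *ᵥ v - v) ⬝ᵥ (sGram U c ω *ᵥ v - v))
      ≤ 12 * r * (v ⬝ᵥ v) := by
  simp only [sGram_mulVec]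
  rw [sampleExp_sum_sub_sq h.sum_one (fun i => (c i * (U i ⬝ᵥ v)) • U i)]
  set μ := ∑ i, π i • (c i * (U i ⬝ᵥ v)) • U i with hμ
  have hM := h.m_pos
  have hr := h.r_pos
  have hμz : ∀ z, μ ⬝ᵥ z = ∑ i, π i * c i * (U i ⬝ᵥ v) * (U i ⬝ᵥ z) := fun z => by
    rw [hμ, sum_dotProduct]
    exact Finset.sum_congr rfl fun i _ => by simp only [smul_dotProduct, smul_eq_mul]; ring
  have hvv := dotProduct_self_nonneg' v
  have hμμ := dotProduct_self_nonneg' μ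
  have hV : ((k : ℝ) + 1) * ∑ i, π i * (((c i * (U i ⬝ᵥ v)) • U i) ⬝ᵥ ((c i * (U i ⬝ᵥ v)) • U i))
      ≤ 4 * r * (v ⬝ᵥ v) := by
    rw [← row_parseval h.orth v v, Finset.mul_sum, Finset.mul_sum]
    refine Finset.sum_le_sum fun i _ => ?_
    simp only [smul_dotProduct, dotProduct_smul, smul_eq_mul]
    have h1 := h.le_two i
    have h2 := h.weight_lev i
    have h3 : (((k : ℝ) + 1) * π i * c i) * (c i * (U i ⬝ᵥ U i)) ≤ 2 * (2 * r) :=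
      mul_le_mul h1 h2 (mul_nonneg (h.weight_pos i).le (dotProduct_self_nonneg' _)) (by norm_num)
    nlinarith [mul_le_mul_of_nonneg_right h3 (mul_self_nonneg (U i ⬝ᵥ v))]
  have hμv : v ⬝ᵥ v ≤ ((k : ℝ) + 1) * (μ ⬝ᵥ v) := by
    rw [hμz, ← row_parseval h.orth v v, Finset.mul_sum]
    refine Finset.sum_le_sum fun i _ => ?_
    nlinarith [mul_le_mul_of_nonneg_right (h.one_le i) (mul_self_nonneg (U i ⬝ᵥ v))]
  have hq : ((k : ℝ) + 1) ^ 2 * (μ ⬝ᵥ μ) ≤ (1 + 2 * r) ^ 2 * (v ⬝ᵥ v) := by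
    have h1 : ((k : ℝ) + 1) * (μ ⬝ᵥ μ)
        = ∑ i, (((k : ℝ) + 1) * π i * c i * (U i ⬝ᵥ v)) * (U i ⬝ᵥ μ) := by
      rw [hμz, Finset.mul_sum]; exact Finset.sum_congr rfl fun i _ => by ring
    have h2 := Finset.sum_mul_sq_le_sq_mul_sq Finset.univ
      (fun i => ((k : ℝ) + 1) * π i * c i * (U i ⬝ᵥ v)) (fun i => U i ⬝ᵥ μ)
    have h3 : ∑ i, (U i ⬝ᵥ μ) ^ 2 = μ ⬝ᵥ μ := by
      simp only [sq]; exact row_parseval h.orth μ μ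
    have h4 : ∑ i, (((k : ℝ) + 1) * π i * c i * (U i ⬝ᵥ v)) ^ 2 ≤ (1 + 2 * r) ^ 2 * (v ⬝ᵥ v) := by
      rw [← row_parseval h.orth v v, Finset.mul_sum]
      refine Finset.sum_le_sum fun i _ => ?_
      have h5 : (((k : ℝ) + 1) * π i * c i) ^ 2 ≤ (1 + 2 * r) ^ 2 :=
        pow_le_pow_left₀ (by linarith [h.one_le i]) (h.le_one_add i) 2
      nlinarith [mul_le_mul_of_nonneg_right h5 (mul_self_nonneg (U i ⬝ᵥ v))]
    rw [← h1, h3] at h2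
    rcases hμμ.eq_or_lt with h0 | h0
    · rw [← h0]; nlinarith [mul_nonneg (sq_nonneg (1 + 2 * r)) hvv]
    · have h6 := h2.trans (mul_le_mul_of_nonneg_right h4 hμμ)
      refine le_of_mul_le_mul_right ?_ h0
      linarith
  have hk : (0 : ℝ) ≤ k := Nat.cast_nonneg k
  have hV0 : 0 ≤ ∑ i, π i * (((c i * (U i ⬝ᵥ v)) • U i) ⬝ᵥ ((c i * (U i ⬝ᵥ v)) • U i)) :=
    Finset.sum_nonneg fun i _ => mul_nonneg (h.pos i).le (dotProduct_self_nonneg' _)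
  -- one draw fewer than the normalisation `k + 1` costs a relative error at most `r`
  have e1 : (k : ℝ) * (k - 1) * (μ ⬝ᵥ μ) ≤ (1 + 2 * r) ^ 2 * (v ⬝ᵥ v) := by
    refine le_trans ?_ hq
    exact mul_le_mul_of_nonneg_right (by nlinarith) hμμ
  have e2 : (1 - r) * (v ⬝ᵥ v) ≤ k * (μ ⬝ᵥ v) := by
    have h7 : ((k : ℝ) + 1) * ((1 - r) * (v ⬝ᵥ v)) ≤ ((k : ℝ) + 1) * (k * (μ ⬝ᵥ v)) := by
      have h8 := mul_le_mul_of_nonneg_right h.inv_le hvv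
      have h9 := mul_le_mul_of_nonneg_left hμv hk
      nlinarith
    exact le_of_mul_le_mul_left h7 hM
  have e3 : r ^ 2 * (v ⬝ᵥ v) ≤ r / 2 * (v ⬝ᵥ v) :=
    mul_le_mul_of_nonneg_right (by nlinarith [h.r_le]) hvv
  nlinarith

end DebiasedData

namespace WellCond

variable {p : ℕ} {G : Matrix (Fin p) (Fin p) ℝ}

lemma isUnit (h : WellCond G) : IsUnit G := by
  rw [← Matrix.mulVec_injective_iff_isUnit]
  rw [← Matrix.coe_mulVecLin, injective_iff_map_eq_zero]
  intro x hx
  have h1 := h x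
  rw [Matrix.coe_mulVecLin] at hx
  rw [hx, dotProduct_zero] at h1
  exact dotProduct_self_eq_zero.1 (le_antisymm (by linarith) (dotProduct_self_nonneg' x))

lemma mul_inv_vec (h : WellCond G) (z : Fin p → ℝ) : G *ᵥ (G⁻¹ *ᵥ z) = z := by
  rw [mulVec_mulVec, Matrix.mul_nonsing_inv _ ((Matrix.isUnit_iff_isUnit_det G).1 h.isUnit),
    one_mulVec]

lemma inv_mul_vec (h : WellCond G) (z : Fin p → ℝ) : G⁻¹ *ᵥ (G *ᵥ z) = z := by
  rw [mulVec_mulVec, Matrix.nonsing_inv_mul _ ((Matrix.isUnit_iff_isUnit_det G).1 h.isUnit),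
    one_mulVec]

lemma inv_quad_nonneg (h : WellCond G) (z : Fin p → ℝ) : 0 ≤ (G⁻¹ *ᵥ z) ⬝ᵥ z := by
  have h1 := h (G⁻¹ *ᵥ z)
  rw [h.mul_inv_vec] at h1
  linarith [dotProduct_self_nonneg' (G⁻¹ *ᵥ z)]

lemma inv_quad_le (h : WellCond G) (z : Fin p → ℝ) : (G⁻¹ *ᵥ z) ⬝ᵥ z ≤ 12 * (z ⬝ᵥ z) := by
  have h1 := h (G⁻¹ *ᵥ z)
  rw [h.mul_inv_vec] at h1
  have h2 := dotProduct_sq_le (G⁻¹ *ᵥ z) z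
  have h3 := dotProduct_self_nonneg' z
  rcases (h.inv_quad_nonneg z).eq_or_lt with h0 | h0
  · rw [← h0]; linarith
  · refine le_of_mul_le_mul_right ?_ h0
    nlinarith [mul_le_mul_of_nonneg_right h1 h3]

lemma inv_norm_le (h : WellCond G) (z : Fin p → ℝ) :
    (G⁻¹ *ᵥ z) ⬝ᵥ (G⁻¹ *ᵥ z) ≤ 144 * (z ⬝ᵥ z) := by
  have h1 := h (G⁻¹ *ᵥ z)
  rw [h.mul_inv_vec] at h1
  linarith [h.inv_quad_le z]

lemma rankOne_add (h : WellCond G) {a : ℝ} (ha : 0 ≤ a) (u : Fin p → ℝ) :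
    WellCond (a • vecMulVec u u + G) := by
  intro x
  rw [add_mulVec, dotProduct_add, rankOne_mulVec, dotProduct_smul, smul_eq_mul, dotProduct_comm x u]
  nlinarith [h x, mul_nonneg ha (mul_self_nonneg (u ⬝ᵥ x))]

/-- Sherman–Morrison, tested against the updating vector. -/
lemma sherman_morrison (h : WellCond G) {a : ℝ} (ha : 0 ≤ a) (u z : Fin p → ℝ) :
    (u ⬝ᵥ ((a • vecMulVec u u + G)⁻¹ *ᵥ z)) * (1 + a * (u ⬝ᵥ (G⁻¹ *ᵥ u)))
      = u ⬝ᵥ (G⁻¹ *ᵥ z) := by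
  have h1 := (h.rankOne_add ha u).mul_inv_vec z
  set y := (a • vecMulVec u u + G)⁻¹ *ᵥ z
  rw [add_mulVec, rankOne_mulVec] at h1
  rw [← h1, mulVec_add, h.inv_mul_vec, mulVec_smul, dotProduct_add, dotProduct_smul, smul_eq_mul]
  ring

end WellCond

lemma illInd_of {p : ℕ} {G : Matrix (Fin p) (Fin p) ℝ} (h : WellCond G) : illInd G = 0 := by
  simp [illInd, h]

lemma illInd_of_not {p : ℕ} {G : Matrix (Fin p) (Fin p) ℝ} (h : ¬ WellCond G) : illInd G = 1 := by
  simp [illInd, h]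

/-- A sum over draws of a function of one draw and the Gram matrix, with that draw separated. -/
lemma sampleExp_exchange {n p k : ℕ} (π c : Fin n → ℝ) (U : Matrix (Fin n) (Fin p) ℝ)
    (Φ : Fin n → Matrix (Fin p) (Fin p) ℝ → ℝ) :
    sampleExp π (k + 1) (fun ω => ∑ s, Φ (ω s) (sGram U c ω))
      = ((k : ℝ) + 1) * ∑ i, π i * sampleExp π k
          (fun ω => Φ i (c i • vecMulVec (U i) (U i) + sGram U c ω)) := by
  rw [sampleExp_sum]
  have : ∀ s : Fin (k + 1), sampleExp π (k + 1) (fun ω => Φ (ω s) (sGram U c ω))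
      = ∑ i, π i * sampleExp π k
          (fun ω => Φ i (c i • vecMulVec (U i) (U i) + sGram U c ω)) := fun s => by
    rw [sampleExp_succ π s]
    simp only [sGram_insertNth, Fin.insertNth_apply_same]
  simp [this]

namespace DebiasedData

variable {n p : ℕ} {U : Matrix (Fin n) (Fin p) ℝ} {π c : Fin n → ℝ} {k : ℕ} {r : ℝ}

/-- Relative error of the leave-one-out leverage score of row `i` computed with the inverse of
the sampled Gram matrix `G`. -/
def levErr (U : Matrix (Fin n) (Fin p) ℝ) (π : Fin n → ℝ) (k : ℕ) (i : Fin n)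
    (G : Matrix (Fin p) (Fin p) ℝ) : ℝ :=
  (U i ⬝ᵥ (G⁻¹ *ᵥ U i) - U i ⬝ᵥ U i) / (((k : ℝ) + 1) * π i)

/-- The mean square of `levErr`: since `uᵀ G⁻¹ u - uᵀ u = -(G⁻¹ u)ᵀ (G u - u)`, this reduces to
`gram_sub_sq`. -/
lemma levErr_sq (h : DebiasedData U π c k r) (i : Fin n) :
    sampleExp π k (fun ω => (1 - illInd (sGram U c ω)) * levErr U π k i (sGram U c ω) ^ 2)
      ≤ 1728 * r ^ 3 := by
  have hd : 0 < ((k : ℝ) + 1) * π i := mul_pos h.m_pos (h.pos i)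
  have hl := dotProduct_self_nonneg' (U i)
  set l := U i ⬝ᵥ U i with hl_def
  have pt : ∀ ω : Fin k → Fin n,
      (1 - illInd (sGram U c ω)) * levErr U π k i (sGram U c ω) ^ 2
      ≤ (144 * l / (((k : ℝ) + 1) * π i) ^ 2) *
        ((sGram U c ω *ᵥ U i - U i) ⬝ᵥ (sGram U c ω *ᵥ U i - U i)) := fun ω => by
    have hw := dotProduct_self_nonneg' (sGram U c ω *ᵥ U i - U i)
    by_cases hG : WellCond (sGram U c ω)
    · rw [illInd_of hG]
      set G := sGram U c ω with hGd
      have hs : (G⁻¹ *ᵥ U i) ⬝ᵥ (G *ᵥ U i) = l := by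
        rw [dotProduct_mulVec, ← mulVec_transpose, hGd, sGram_transpose, ← hGd, hG.mul_inv_vec]
      have h1 : U i ⬝ᵥ (G⁻¹ *ᵥ U i) - l = -((G⁻¹ *ᵥ U i) ⬝ᵥ (G *ᵥ U i - U i)) := by
        rw [dotProduct_sub, hs, dotProduct_comm (U i)]; ring
      have h2 := dotProduct_sq_le (G⁻¹ *ᵥ U i) (G *ᵥ U i - U i)
      have h3 := mul_le_mul_of_nonneg_right (hG.inv_norm_le (U i)) hw
      rw [levErr, ← hl_def, h1, div_pow, sub_zero, one_mul, neg_sq, div_mul_eq_mul_div]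
      gcongr
      exact h2.trans h3
    · rw [illInd_of_not hG, sub_self, zero_mul]
      positivity
  refine (sampleExp_mono h.pos pt).trans ?_
  rw [sampleExp_mul_left]
  have h1 := mul_le_mul_of_nonneg_left (h.gram_sub_sq (U i))
    (by positivity : 0 ≤ 144 * l / (((k : ℝ) + 1) * π i) ^ 2)
  refine h1.trans ?_
  have h2 : (l / (((k : ℝ) + 1) * π i)) ^ 2 ≤ r ^ 2 := by
    refine pow_le_pow_left₀ (by positivity) ?_ 2
    rw [div_le_iff₀ hd]; exact h.lev_le i
  have h3 : 144 * l / (((k : ℝ) + 1) * π i) ^ 2 * (12 * r * (U i ⬝ᵥ U i))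
      = 1728 * r * (l / (((k : ℝ) + 1) * π i)) ^ 2 := by
    rw [← hl_def, div_pow]; ring
  rw [h3]
  nlinarith [mul_le_mul_of_nonneg_left h2 h.r_pos.le]

/-- For a fixed well-conditioned leave-one-out Gram matrix the debiased weights cancel the
leading term; what remains is governed by `levErr`. -/
lemma main_pointwise (h : DebiasedData U π c k r) {G : Matrix (Fin p) (Fin p) ℝ}
    (hG : WellCond G) {ν : Fin n → ℝ} (hν : ν ᵥ* U = 0) (z : Fin p → ℝ) :
    (∑ i, ((k : ℝ) + 1) * π i * (c i * ν i *
        (U i ⬝ᵥ ((c i • vecMulVec (U i) (U i) + G)⁻¹ *ᵥ z)))) ^ 2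
      ≤ 576 * (z ⬝ᵥ z) * ∑ i, ν i ^ 2 * levErr U π k i G ^ 2 := by
  -- `uᵀ G⁻¹ u ≥ 0` and the relative leverage is at most `r ≤ 1 / 2`
  have e1 : ∀ i, 1 / 2 ≤ 1 + levErr U π k i G := fun i => by
    have hd : 0 < ((k : ℝ) + 1) * π i := mul_pos h.m_pos (h.pos i)
    have h1 : -(1 / 2) ≤ levErr U π k i G := by
      rw [levErr, le_div_iff₀ hd]
      have := hG.inv_quad_nonneg (U i)
      rw [dotProduct_comm] at this
      nlinarith [h.lev_le i, h.r_le]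
    linarith
  have e2 : ∀ i, ((k : ℝ) + 1) * π i * (c i * ν i *
        (U i ⬝ᵥ ((c i • vecMulVec (U i) (U i) + G)⁻¹ *ᵥ z)))
      = ν i * (U i ⬝ᵥ (G⁻¹ *ᵥ z))
        - (ν i * levErr U π k i G / (1 + levErr U π k i G)) * (U i ⬝ᵥ (G⁻¹ *ᵥ z)) := fun i => by
    have hd : 0 < ((k : ℝ) + 1) * π i := mul_pos h.m_pos (h.pos i)
    have hb : 1 + levErr U π k i G ≠ 0 := by linarith [e1 i]
    have h1 := hG.sherman_morrison (h.weight_pos i).le (U i) z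
    have h2 : 1 + c i * (U i ⬝ᵥ (G⁻¹ *ᵥ U i))
        = ((k : ℝ) + 1) * π i * c i * (1 + levErr U π k i G) := by
      have h3 := h.weight_mul i
      have h4 : ((k : ℝ) + 1) * π i * levErr U π k i G
          = U i ⬝ᵥ (G⁻¹ *ᵥ U i) - U i ⬝ᵥ U i := by
        rw [levErr, mul_div_assoc', mul_div_cancel_left₀ _ hd.ne']
      linear_combination (-1 : ℝ) * h3 - c i * h4
    rw [h2] at h1
    rw [← h1]
    field_simp
    ring
  have e3 : ∑ i, ν i * (U i ⬝ᵥ (G⁻¹ *ᵥ z)) = 0 := by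
    have : ν ⬝ᵥ (U *ᵥ (G⁻¹ *ᵥ z)) = 0 := by rw [dotProduct_mulVec, hν, zero_dotProduct]
    exact this
  simp only [e2, Finset.sum_sub_distrib, e3, zero_sub, neg_sq]
  refine (Finset.sum_mul_sq_le_sq_mul_sq _ _ _).trans ?_
  have h5 : ∑ i, (U i ⬝ᵥ (G⁻¹ *ᵥ z)) ^ 2 ≤ 144 * (z ⬝ᵥ z) := by
    simp only [sq]; rw [row_parseval h.orth]; exact hG.inv_norm_le z
  have h6 : ∑ i, (ν i * levErr U π k i G / (1 + levErr U π k i G)) ^ 2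
      ≤ 4 * ∑ i, ν i ^ 2 * levErr U π k i G ^ 2 := by
    rw [Finset.mul_sum]
    refine Finset.sum_le_sum fun i _ => ?_
    have := e1 i
    rw [div_pow, div_le_iff₀ (by positivity), mul_pow]
    have h7 : 1 ≤ 4 * (1 + levErr U π k i G) ^ 2 := by nlinarith
    nlinarith [mul_le_mul_of_nonneg_left h7
      (by positivity : 0 ≤ ν i ^ 2 * levErr U π k i G ^ 2)]
  have h8 := mul_le_mul h6 h5 (Finset.sum_nonneg fun i _ => sq_nonneg _)
    (mul_nonneg (by norm_num) (Finset.sum_nonneg fun i _ => by positivity))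
  linarith

end DebiasedData

/-- Jensen's inequality for the square. -/
lemma sampleExp_sq_le {n k : ℕ} {π : Fin n → ℝ} (hπ : ∀ i, 0 < π i) (hπ1 : ∑ i, π i = 1)
    (f : (Fin k → Fin n) → ℝ) : sampleExp π k f ^ 2 ≤ sampleExp π k (fun ω => f ω ^ 2) := by
  have h := Finset.sum_sq_le_sum_mul_sum_of_sq_le_mul (Finset.univ : Finset (Fin k → Fin n))
    (r := fun ω => samplingP π ω * f ω) (f := fun ω => samplingP π ω * 1)
    (g := fun ω => samplingP π ω * f ω ^ 2)
    (fun ω _ => by simpa using samplingP_nonneg hπ ω)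
    (fun ω _ => mul_nonneg (samplingP_nonneg hπ ω) (sq_nonneg _)) (fun ω _ => le_of_eq (by ring))
  have h1 : ∑ ω : Fin k → Fin n, samplingP π ω * 1 = 1 := sampleExp_one hπ1 k
  rw [h1, one_mul] at h
  exact h

namespace DebiasedData

variable {n p : ℕ} {U : Matrix (Fin n) (Fin p) ℝ} {π c : Fin n → ℝ} {k : ℕ} {r : ℝ}

/-- Contribution of samples whose leave-one-out Gram matrix is well conditioned. -/
lemma good_part (h : DebiasedData U π c k r) {ν : Fin n → ℝ} (hν : ν ᵥ* U = 0)
    (z : Fin p → ℝ) :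
    (((k : ℝ) + 1) * ∑ i, π i * sampleExp π k (fun ω => (1 - illInd (sGram U c ω)) *
        (c i * ν i * (U i ⬝ᵥ ((c i • vecMulVec (U i) (U i) + sGram U c ω)⁻¹ *ᵥ z))))) ^ 2
      ≤ 1000000 * r ^ 3 * ((ν ⬝ᵥ ν) * (z ⬝ᵥ z)) := by
  have hz := dotProduct_self_nonneg' z
  have e1 : ((k : ℝ) + 1) * ∑ i, π i * sampleExp π k (fun ω => (1 - illInd (sGram U c ω)) *
        (c i * ν i * (U i ⬝ᵥ ((c i • vecMulVec (U i) (U i) + sGram U c ω)⁻¹ *ᵥ z))))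
      = sampleExp π k (fun ω => (1 - illInd (sGram U c ω)) *
        ∑ i, ((k : ℝ) + 1) * π i * (c i * ν i *
          (U i ⬝ᵥ ((c i • vecMulVec (U i) (U i) + sGram U c ω)⁻¹ *ᵥ z)))) := by
    simp only [← sampleExp_mul_left, Finset.mul_sum]
    rw [← sampleExp_sum]
    congr 1
    funext ω
    exact Finset.sum_congr rfl fun i _ => by ring
  rw [e1]
  refine (sampleExp_sq_le h.pos h.sum_one _).trans ?_
  have pt : ∀ ω : Fin k → Fin n, ((1 - illInd (sGram U c ω)) *
        ∑ i, ((k : ℝ) + 1) * π i * (c i * ν i *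
          (U i ⬝ᵥ ((c i • vecMulVec (U i) (U i) + sGram U c ω)⁻¹ *ᵥ z)))) ^ 2
      ≤ 576 * (z ⬝ᵥ z) * ∑ i, ν i ^ 2 *
        ((1 - illInd (sGram U c ω)) * levErr U π k i (sGram U c ω) ^ 2) := fun ω => by
    by_cases hG : WellCond (sGram U c ω)
    · simp only [illInd_of hG, sub_zero, one_mul]
      exact h.main_pointwise hG hν z
    · simp [illInd_of_not hG]
  refine (sampleExp_mono h.pos pt).trans ?_
  rw [sampleExp_mul_left, sampleExp_sum]
  simp only [sampleExp_mul_left]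
  have h1 : ∑ i, ν i ^ 2 * sampleExp π k (fun ω => (1 - illInd (sGram U c ω)) *
      levErr U π k i (sGram U c ω) ^ 2) ≤ (ν ⬝ᵥ ν) * (1728 * r ^ 3) := by
    rw [dotProduct, Finset.sum_mul]
    refine Finset.sum_le_sum fun i _ => ?_
    rw [← sq]
    exact mul_le_mul_of_nonneg_left (h.levErr_sq i) (sq_nonneg _)
  have h2 := mul_le_mul_of_nonneg_left h1 (by positivity : 0 ≤ 576 * (z ⬝ᵥ z))
  have h3 : 0 ≤ r ^ 3 * ((ν ⬝ᵥ ν) * (z ⬝ᵥ z)) :=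
    mul_nonneg (pow_nonneg h.r_pos.le 3) (mul_nonneg (dotProduct_self_nonneg' ν) hz)
  linarith

lemma illInd_mul_one_sub {q : ℕ} (G : Matrix (Fin q) (Fin q) ℝ) :
    (1 - illInd G) ^ 2 = 1 - illInd G ∧ illInd G ^ 2 = illInd G := by
  by_cases hG : WellCond G
  · simp [illInd_of hG]
  · simp [illInd_of_not hG]

lemma one_sub_illInd_nonneg {q : ℕ} (G : Matrix (Fin q) (Fin q) ℝ) : 0 ≤ 1 - illInd G := by
  rw [← (illInd_mul_one_sub G).1]; positivity

/-- Contribution of samples whose leave-one-out Gram matrix is ill conditioned. Cauchy–Schwarz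
puts the full quadratic form `∑ₛ cₛ (uₛᵀ G⁻¹ z)² = zᵀ G⁻¹ z` on one side, so the number of rows
does not enter. -/
lemma bad_part (h : DebiasedData U π c k r) (ν : Fin n → ℝ) (z : Fin p → ℝ) :
    (((k : ℝ) + 1) * ∑ i, π i * sampleExp π k (fun ω =>
        illInd (sGram U c ω) * (1 - illInd (c i • vecMulVec (U i) (U i) + sGram U c ω)) *
        (c i * ν i * (U i ⬝ᵥ ((c i • vecMulVec (U i) (U i) + sGram U c ω)⁻¹ *ᵥ z))))) ^ 2
      ≤ 24 * sampleExp π k (fun ω => illInd (sGram U c ω)) * ((ν ⬝ᵥ ν) * (z ⬝ᵥ z)) := by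
  set H : Fin n → (Fin k → Fin n) → Matrix (Fin p) (Fin p) ℝ :=
    fun i ω => c i • vecMulVec (U i) (U i) + sGram U c ω with hH
  have hM := h.m_pos
  have conv : ∀ f : Fin n → (Fin k → Fin n) → ℝ,
      ((k : ℝ) + 1) * ∑ i, π i * sampleExp π k (f i)
        = ∑ x : Fin n × (Fin k → Fin n), (((k : ℝ) + 1) * (π x.1 * (samplingP π x.2 * f x.1 x.2))) :=
    fun f => by
      rw [Fintype.sum_prod_type]
      simp only [sampleExp, Finset.mul_sum]
  have hS0 : ∀ ω : Fin k → Fin n, 0 ≤ samplingP π ω := samplingP_nonneg h.pos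
  have hc0 : ∀ i, 0 ≤ c i := fun i => (h.weight_pos i).le
  have hp0 : ∀ i, 0 ≤ π i := fun i => (h.pos i).le
  have cs := Finset.sum_sq_le_sum_mul_sum_of_sq_le_mul
    (Finset.univ : Finset (Fin n × (Fin k → Fin n)))
    (r := fun x => ((k : ℝ) + 1) * (π x.1 * (samplingP π x.2 *
      (illInd (sGram U c x.2) * (1 - illInd (H x.1 x.2)) *
        (c x.1 * ν x.1 * (U x.1 ⬝ᵥ ((H x.1 x.2)⁻¹ *ᵥ z)))))))
    (f := fun x => ((k : ℝ) + 1) * (π x.1 * (samplingP π x.2 *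
      (c x.1 * ν x.1 ^ 2 * illInd (sGram U c x.2)))))
    (g := fun x => ((k : ℝ) + 1) * (π x.1 * (samplingP π x.2 *
      ((1 - illInd (H x.1 x.2)) * (c x.1 * (U x.1 ⬝ᵥ ((H x.1 x.2)⁻¹ *ᵥ z)) ^ 2)))))
    (fun x _ => mul_nonneg hM.le (mul_nonneg (hp0 _) (mul_nonneg (hS0 _) (mul_nonneg
      (mul_nonneg (hc0 _) (sq_nonneg _)) (illInd_nonneg _)))))
    (fun x _ => mul_nonneg hM.le (mul_nonneg (hp0 _) (mul_nonneg (hS0 _) (mul_nonneg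
      (one_sub_illInd_nonneg _) (mul_nonneg (hc0 _) (sq_nonneg _))))))
    (fun x _ => by
      refine le_of_eq ?_
      have h1 := (illInd_mul_one_sub (sGram U c x.2)).2
      have h2 := (illInd_mul_one_sub (H x.1 x.2)).1
      simp only [mul_pow, h1, h2]
      ring)
  rw [← conv (fun i ω => illInd (sGram U c ω) * (1 - illInd (H i ω)) *
        (c i * ν i * (U i ⬝ᵥ ((H i ω)⁻¹ *ᵥ z)))),
    ← conv (fun i ω => c i * ν i ^ 2 * illInd (sGram U c ω)),
    ← conv (fun i ω => (1 - illInd (H i ω)) * (c i * (U i ⬝ᵥ ((H i ω)⁻¹ *ᵥ z)) ^ 2))] at cs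
  refine cs.trans ?_
  set η := sampleExp π k (fun ω => illInd (sGram U c ω)) with hη
  have hη0 : 0 ≤ η := Finset.sum_nonneg fun ω _ => mul_nonneg (hS0 ω) (illInd_nonneg _)
  have f1 : ((k : ℝ) + 1) * ∑ i, π i * sampleExp π k
      (fun ω => c i * ν i ^ 2 * illInd (sGram U c ω)) ≤ 2 * η * (ν ⬝ᵥ ν) := by
    simp only [sampleExp_mul_left]
    rw [← hη, dotProduct, Finset.mul_sum, Finset.mul_sum]
    refine Finset.sum_le_sum fun i _ => ?_
    nlinarith [mul_le_mul_of_nonneg_right (h.le_two i) (mul_nonneg (sq_nonneg (ν i)) hη0)]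
  have f2 : ((k : ℝ) + 1) * ∑ i, π i * sampleExp π k
      (fun ω => (1 - illInd (H i ω)) * (c i * (U i ⬝ᵥ ((H i ω)⁻¹ *ᵥ z)) ^ 2))
      ≤ 12 * (z ⬝ᵥ z) := by
    have h1 := sampleExp_exchange (k := k) π c U
      (fun i G => (1 - illInd G) * (c i * (U i ⬝ᵥ (G⁻¹ *ᵥ z)) ^ 2))
    rw [← h1, ← sampleExp_const h.sum_one (k + 1) (12 * (z ⬝ᵥ z))]
    refine sampleExp_mono h.pos fun ω => ?_
    rw [← Finset.mul_sum, ← sGram_quad]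
    by_cases hG : WellCond (sGram U c ω)
    · rw [illInd_of hG, hG.mul_inv_vec]
      linarith [hG.inv_quad_le z]
    · rw [illInd_of_not hG]
      linarith [dotProduct_self_nonneg' z]
  have h3 := mul_le_mul f1 f2 (by
    refine mul_nonneg hM.le (Finset.sum_nonneg fun i _ => mul_nonneg (hp0 i)
      (Finset.sum_nonneg fun ω _ => mul_nonneg (hS0 ω) (mul_nonneg (one_sub_illInd_nonneg _)
        (mul_nonneg (hc0 _) (sq_nonneg _)))))) (by
    have := dotProduct_self_nonneg' ν; positivity)
  linarith

/-- The bilinear form of the (unnormalised) bias on `(range U)ᗮ × ℝᵖ`. -/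
lemma bias_form (h : DebiasedData U π c k r) {ν : Fin n → ℝ} (hν : ν ᵥ* U = 0)
    (z : Fin p → ℝ) :
    sampleExp π (k + 1) (fun ω => (1 - illInd (sGram U c ω)) *
        ∑ s, c (ω s) * ν (ω s) * (U (ω s) ⬝ᵥ ((sGram U c ω)⁻¹ *ᵥ z))) ^ 2
      ≤ (48 * sampleExp π k (fun ω => illInd (sGram U c ω)) + 2000000 * r ^ 3)
        * ((ν ⬝ᵥ ν) * (z ⬝ᵥ z)) := by
  have h1 := sampleExp_exchange (k := k) π c U
    (fun i G => (1 - illInd G) * (c i * ν i * (U i ⬝ᵥ (G⁻¹ *ᵥ z))))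
  simp only [← Finset.mul_sum] at h1
  rw [h1]
  -- adding a draw preserves well-conditioning, so the event splits by the leave-one-out matrix
  have h2 : ∀ (i : Fin n) (ω : Fin k → Fin n),
      1 - illInd (c i • vecMulVec (U i) (U i) + sGram U c ω) = (1 - illInd (sGram U c ω)) +
        illInd (sGram U c ω) * (1 - illInd (c i • vecMulVec (U i) (U i) + sGram U c ω)) :=
    fun i ω => by
      by_cases hG : WellCond (sGram U c ω)
      · rw [illInd_of hG, illInd_of (hG.rankOne_add (h.weight_pos i).le (U i))]; ring
      · rw [illInd_of_not hG]; ring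
  have h3 : ∀ i, sampleExp π k (fun ω =>
        (1 - illInd (c i • vecMulVec (U i) (U i) + sGram U c ω)) *
        (c i * ν i * (U i ⬝ᵥ ((c i • vecMulVec (U i) (U i) + sGram U c ω)⁻¹ *ᵥ z))))
      = sampleExp π k (fun ω => (1 - illInd (sGram U c ω)) *
        (c i * ν i * (U i ⬝ᵥ ((c i • vecMulVec (U i) (U i) + sGram U c ω)⁻¹ *ᵥ z))))
      + sampleExp π k (fun ω =>
        illInd (sGram U c ω) * (1 - illInd (c i • vecMulVec (U i) (U i) + sGram U c ω)) *
        (c i * ν i * (U i ⬝ᵥ ((c i • vecMulVec (U i) (U i) + sGram U c ω)⁻¹ *ᵥ z)))) :=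
    fun i => by
      simp only [sampleExp]
      rw [← Finset.sum_add_distrib]
      refine Finset.sum_congr rfl fun ω _ => ?_
      linear_combination samplingP π ω *
        (c i * ν i * (U i ⬝ᵥ ((c i • vecMulVec (U i) (U i) + sGram U c ω)⁻¹ *ᵥ z))) * h2 i ω
  simp only [h3, mul_add, Finset.sum_add_distrib]
  have g := h.good_part hν z
  have b := h.bad_part ν z
  refine (add_sq_le).trans ?_
  linarith

end DebiasedData

/-! ### Reduction to the bilinear form -/

lemma trace_transpose_mul_self {k l : ℕ} (A : Matrix (Fin k) (Fin l) ℝ) :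
    (Aᵀ * A).trace = ∑ j, (Aᵀ j) ⬝ᵥ (Aᵀ j) := by
  simp [Matrix.trace, Matrix.mul_apply, dotProduct]

lemma frobNorm_orth_mul {n p l : ℕ} {U : Matrix (Fin n) (Fin p) ℝ} (hU : Uᵀ * U = 1)
    (A : Matrix (Fin p) (Fin l) ℝ) : frobNorm (U * A) = frobNorm A := by
  rw [frobNorm, frobNorm, transpose_mul, Matrix.mul_assoc, ← Matrix.mul_assoc Uᵀ, hU,
    Matrix.one_mul]

/-- A bound on the bilinear form of `A` against the columns of `N` bounds `‖A N‖_F`. -/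
lemma frobNorm_mul_le {n p l : ℕ} {A : Matrix (Fin p) (Fin n) ℝ} {N : Matrix (Fin n) (Fin l) ℝ}
    {β : ℝ} (hβ : 0 ≤ β)
    (h : ∀ j z, (z ⬝ᵥ (A *ᵥ Nᵀ j)) ^ 2 ≤ β ^ 2 * ((Nᵀ j ⬝ᵥ Nᵀ j) * (z ⬝ᵥ z))) :
    frobNorm (A * N) ≤ β * frobNorm N := by
  rw [frobNorm, frobNorm, ← Real.sqrt_sq hβ, ← Real.sqrt_mul (sq_nonneg β)]
  refine Real.sqrt_le_sqrt ?_
  rw [trace_transpose_mul_self, trace_transpose_mul_self, Finset.mul_sum]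
  refine Finset.sum_le_sum fun j _ => ?_
  have e : (A * N)ᵀ j = A *ᵥ Nᵀ j := by
    ext i; simp [Matrix.mul_apply, mulVec, dotProduct]
  rw [e]
  have h1 := h j (A *ᵥ Nᵀ j)
  rcases (dotProduct_self_nonneg' (A *ᵥ Nᵀ j)).eq_or_lt with h0 | h0
  · rw [← h0]; have := dotProduct_self_nonneg' (Nᵀ j); positivity
  · refine le_of_mul_le_mul_right ?_ h0
    linarith

open scoped MatrixOrder Matrix.Norms.L2Operator in
/-- An orthonormal basis of the column space of `X`, with the change of basis. -/
lemma exists_orthonormal_factor {n p : ℕ} {X : Matrix (Fin n) (Fin p) ℝ}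
    (hX : IsUnit (Xᵀ * X).det) :
    ∃ (U : Matrix (Fin n) (Fin p) ℝ) (R : Matrix (Fin p) (Fin p) ℝ),
      Uᵀ * U = 1 ∧ IsUnit R.det ∧ X = U * R := by
  have hps : (Xᵀ * X).PosSemidef := by
    simpa using Matrix.posSemidef_conjTranspose_mul_self X
  obtain ⟨R, hR⟩ : ∃ R : Matrix (Fin p) (Fin p) ℝ, Xᵀ * X = Rᵀ * R := by
    obtain ⟨R, hR⟩ := CStarAlgebra.nonneg_iff_eq_star_mul_self.mp hps.nonneg
    exact ⟨R, by rw [hR, star_eq_conjTranspose, conjTranspose_eq_transpose_of_trivial]⟩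
  have hRu : IsUnit R.det := by
    rw [hR, det_mul, det_transpose] at hX
    exact isUnit_of_mul_isUnit_right hX
  refine ⟨X * R⁻¹, R, ?_, hRu, ?_⟩
  · rw [transpose_mul, Matrix.mul_assoc, ← Matrix.mul_assoc Xᵀ, hR, transpose_nonsing_inv,
      Matrix.mul_assoc, Matrix.mul_nonsing_inv _ hRu, Matrix.mul_one,
      Matrix.nonsing_inv_mul _ (by rwa [det_transpose])]
  · rw [Matrix.mul_assoc, Matrix.nonsing_inv_mul _ hRu, Matrix.mul_one]

lemma inv_transpose_mul_mul {p : ℕ} (R G : Matrix (Fin p) (Fin p) ℝ) :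
    (Rᵀ * G * R)⁻¹ = R⁻¹ * G⁻¹ * Rᵀ⁻¹ := by
  rw [Matrix.mul_inv_rev, Matrix.mul_inv_rev, Matrix.mul_assoc]

section Reduction

variable {n p : ℕ} {X U : Matrix (Fin n) (Fin p) ℝ} {R : Matrix (Fin p) (Fin p) ℝ}

lemma projX_eq (hU : Uᵀ * U = 1) (hR : IsUnit R.det) (hX : X = U * R) :
    projX X = U * Uᵀ := by
  have h1 : Xᵀ * X = Rᵀ * 1 * R := by
    rw [hX, transpose_mul, Matrix.mul_assoc, ← Matrix.mul_assoc Uᵀ, hU, Matrix.mul_one,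
      Matrix.one_mul]
  have hRt : IsUnit Rᵀ.det := by rwa [det_transpose]
  rw [projX, h1, inv_transpose_mul_mul, hX, transpose_mul, inv_one, Matrix.mul_one]
  calc U * R * (R⁻¹ * Rᵀ⁻¹) * (Rᵀ * Uᵀ)
      = U * (R * R⁻¹) * (Rᵀ⁻¹ * Rᵀ) * Uᵀ := by simp only [Matrix.mul_assoc]
    _ = U * Uᵀ := by
      rw [Matrix.mul_nonsing_inv _ hR, Matrix.nonsing_inv_mul _ hRt, Matrix.mul_one,
        Matrix.mul_one]

lemma lev_eq (hU : Uᵀ * U = 1) (hR : IsUnit R.det) (hX : X = U * R) (i : Fin n) :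
    lev X i = U i ⬝ᵥ U i := by
  have h1 : lev X i = projX X i i := by
    rw [lev, projX, dotProduct_mulVec]
    simp only [Matrix.mul_apply, vecMul, dotProduct, transpose_apply]
  rw [h1, projX_eq hU hR hX]
  simp [Matrix.mul_apply, dotProduct]

lemma projDeb_eq (hR : IsUnit R.det) (hX : X = U * R) (π : Fin n → ℝ) {m : ℕ}
    (ω : Fin m → Fin n) :
    projDeb X π ω = U * ((samplingSdeb X π ω * U)ᵀ * (samplingSdeb X π ω * U))⁻¹ *
      (samplingSdeb X π ω * U)ᵀ * samplingSdeb X π ω := by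
  rw [projDeb]
  set W := samplingSdeb X π ω
  have h1 : (W * X)ᵀ * (W * X) = Rᵀ * ((W * U)ᵀ * (W * U)) * R := by
    rw [hX]; simp only [transpose_mul, Matrix.mul_assoc]
  have h2 : (W * X)ᵀ = Rᵀ * (W * U)ᵀ := by
    rw [hX]; simp only [transpose_mul, Matrix.mul_assoc]
  have hRt : IsUnit Rᵀ.det := by rwa [det_transpose]
  rw [h1, h2, inv_transpose_mul_mul]
  set G := (W * U)ᵀ * (W * U)
  calc X * (R⁻¹ * G⁻¹ * Rᵀ⁻¹) * (Rᵀ * (W * U)ᵀ) * W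
      = U * (R * R⁻¹) * G⁻¹ * (Rᵀ⁻¹ * Rᵀ) * (W * U)ᵀ * W := by
        rw [hX]; simp only [Matrix.mul_assoc]
    _ = _ := by
      rw [Matrix.mul_nonsing_inv _ hR, Matrix.nonsing_inv_mul _ hRt, Matrix.mul_one,
        Matrix.mul_one]

lemma samplingSdeb_apply {π c : Fin n → ℝ} {m : ℕ} (hm : 0 < (m : ℝ)) (hπ : ∀ i, 0 < π i)
    (hl : ∀ i, lev X i < m * π i) (hc : ∀ i, c i = (m * π i - lev X i)⁻¹)
    (ω : Fin m → Fin n) (s : Fin m) (j : Fin n) :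
    samplingSdeb X π ω s j = if j = ω s then Real.sqrt (c (ω s)) else 0 := by
  rw [samplingSdeb, diagonal_mul, samplingS, Matrix.of_apply]
  split_ifs
  · have hd : 0 < m * π (ω s) := mul_pos hm (hπ _)
    have h1 : lev X (ω s) / (m * π (ω s)) < 1 := by rw [div_lt_one hd]; exact hl _
    rw [div_mul_div_comm, one_mul, ← Real.sqrt_mul (by linarith), hc, Real.sqrt_inv, one_div]
    congr 3
    rw [sub_mul, one_mul, div_mul_cancel₀ _ hd.ne']
  · rw [mul_zero]

lemma debGram_eq {π c : Fin n → ℝ} {m : ℕ} (hm : 0 < (m : ℝ)) (hπ : ∀ i, 0 < π i)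
    (hl : ∀ i, lev X i < m * π i) (hc : ∀ i, c i = (m * π i - lev X i)⁻¹)
    (ω : Fin m → Fin n) :
    (samplingSdeb X π ω * U)ᵀ * (samplingSdeb X π ω * U) = sGram U c ω := by
  have hc0 : ∀ i, 0 ≤ c i := fun i => by rw [hc]; exact inv_nonneg.2 (by linarith [hl i])
  ext a b
  simp only [Matrix.mul_apply, transpose_apply, samplingSdeb_apply hm hπ hl hc, ite_mul, zero_mul,
    Finset.sum_ite_eq', Finset.mem_univ, if_true, sGram, Matrix.sum_apply, Matrix.smul_apply,
    vecMulVec_apply, smul_eq_mul]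
  refine Finset.sum_congr rfl fun s _ => ?_
  linear_combination (U (ω s) a * U (ω s) b) * Real.mul_self_sqrt (hc0 (ω s))

lemma debCross_mulVec {π c : Fin n → ℝ} {m : ℕ} (hm : 0 < (m : ℝ)) (hπ : ∀ i, 0 < π i)
    (hl : ∀ i, lev X i < m * π i) (hc : ∀ i, c i = (m * π i - lev X i)⁻¹)
    (ω : Fin m → Fin n) (ν : Fin n → ℝ) :
    ((samplingSdeb X π ω * U)ᵀ * samplingSdeb X π ω) *ᵥ ν
      = ∑ s, (c (ω s) * ν (ω s)) • U (ω s) := by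
  have hc0 : ∀ i, 0 ≤ c i := fun i => by rw [hc]; exact inv_nonneg.2 (by linarith [hl i])
  rw [← mulVec_mulVec]
  ext a
  simp only [mulVec, dotProduct, Matrix.mul_apply, transpose_apply,
    samplingSdeb_apply hm hπ hl hc, ite_mul, zero_mul, Finset.sum_ite_eq', Finset.mem_univ,
    if_true, Finset.sum_apply, Pi.smul_apply, smul_eq_mul]
  refine Finset.sum_congr rfl fun s _ => ?_
  linear_combination (U (ω s) a * ν (ω s)) * Real.mul_self_sqrt (hc0 (ω s))

end Reduction

open Classical in
/-- The samples whose Gram matrix is well conditioned. -/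
def goodEvent {n p : ℕ} (U : Matrix (Fin n) (Fin p) ℝ) (c : Fin n → ℝ) (k : ℕ) :
    Finset (Fin k → Fin n) := {ω | WellCond (sGram U c ω)}

lemma sum_goodEvent {n p k : ℕ} (U : Matrix (Fin n) (Fin p) ℝ) (c π : Fin n → ℝ)
    (f : (Fin k → Fin n) → ℝ) :
    ∑ ω ∈ goodEvent U c k, samplingP π ω * f ω
      = sampleExp π k (fun ω => (1 - illInd (sGram U c ω)) * f ω) := by
  classical
  rw [goodEvent, Finset.sum_filter, sampleExp]
  refine Finset.sum_congr rfl fun ω _ => ?_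
  unfold illInd
  split_ifs <;> simp

/-- The conditional bias equals `U A P⊥` with `A` the conditional mean of `G⁻¹ Uᵀ ŠᵀŠ`, so a bound
on the bilinear form of the bias bounds its Frobenius norm. -/
lemma bias_bound {n p m : ℕ} {X U : Matrix (Fin n) (Fin p) ℝ} {R : Matrix (Fin p) (Fin p) ℝ}
    {π c : Fin n → ℝ} (hU : Uᵀ * U = 1) (hR : IsUnit R.det) (hX : X = U * R)
    (hm : 0 < (m : ℝ)) (hπ : ∀ i, 0 < π i)
    (hl : ∀ i, lev X i < m * π i) (hc : ∀ i, c i = (m * π i - lev X i)⁻¹) {B : ℝ} (hB : 0 ≤ B)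
    (hP : 1 / 2 ≤ eventProb (samplingP π) (goodEvent U c m))
    (hform : ∀ (ν : Fin n → ℝ) (z : Fin p → ℝ), ν ᵥ* U = 0 →
      sampleExp π m (fun ω => (1 - illInd (sGram U c ω)) *
        ∑ s, c (ω s) * ν (ω s) * (U (ω s) ⬝ᵥ ((sGram U c ω)⁻¹ *ᵥ z))) ^ 2
      ≤ B ^ 2 * ((ν ⬝ᵥ ν) * (z ⬝ᵥ z))) :
    frobNorm (condExp (samplingP π) (goodEvent U c m) (projDeb X π) - projX X)
      ≤ 2 * B * frobNorm (1 - projX X) := by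
  set ζ := goodEvent U c m with hζ
  set q := eventProb (samplingP π) ζ with hq
  set N : Matrix (Fin n) (Fin n) ℝ := 1 - projX X with hN
  have hPX := projX_eq hU hR hX
  set K : (Fin m → Fin n) → Matrix (Fin p) (Fin n) ℝ := fun ω =>
    (sGram U c ω)⁻¹ * ((samplingSdeb X π ω * U)ᵀ * samplingSdeb X π ω) with hK
  have hgood : ∀ ω ∈ ζ, WellCond (sGram U c ω) := fun ω hω => by
    simpa [hζ, goodEvent] using hω
  have h1 : ∀ ω ∈ ζ, projDeb X π ω = U * (K ω * N) + projX X := fun ω hω => by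
    have hG := (Matrix.isUnit_iff_isUnit_det _).1 (hgood ω hω).isUnit
    have h2 : K ω * U = 1 := by
      simp only [hK]
      rw [Matrix.mul_assoc, Matrix.mul_assoc, debGram_eq hm hπ hl hc, Matrix.nonsing_inv_mul _ hG]
    have h3 : projDeb X π ω = U * K ω := by
      rw [projDeb_eq hR hX, debGram_eq hm hπ hl hc]
      simp only [hK, Matrix.mul_assoc]
    rw [h3, hN, hPX, Matrix.mul_sub, Matrix.mul_one, ← Matrix.mul_assoc (K ω), h2, Matrix.one_mul,
      Matrix.mul_sub, sub_add_cancel]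
  have hq0 : q ≠ 0 := by linarith
  set A : Matrix (Fin p) (Fin n) ℝ := q⁻¹ • ∑ ω ∈ ζ, samplingP π ω • K ω with hA
  have h4 : condExp (samplingP π) ζ (projDeb X π) - projX X = U * (A * N) := by
    have h5 : ∑ ω ∈ ζ, samplingP π ω • projDeb X π ω
        = U * ((∑ ω ∈ ζ, samplingP π ω • K ω) * N) + q • projX X := by
      rw [hq, eventProb, Finset.sum_smul, Matrix.sum_mul, Matrix.mul_sum,
        ← Finset.sum_add_distrib]
      refine Finset.sum_congr rfl fun ω hω => ?_
      rw [h1 ω hω, smul_add, Matrix.smul_mul, Matrix.mul_smul]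
    rw [condExp, h5, ← hq, smul_add, smul_smul, inv_mul_cancel₀ hq0, one_smul, hA,
      Matrix.smul_mul, Matrix.mul_smul, add_sub_cancel_right]
  rw [h4, frobNorm_orth_mul hU]
  refine frobNorm_mul_le (by positivity) fun j z => ?_
  have hν : (Nᵀ j) ᵥ* U = 0 := by
    have h6 : Nᵀ * U = 0 := by
      rw [hN, hPX, transpose_sub, transpose_one, transpose_mul, transpose_transpose,
        Matrix.sub_mul, Matrix.one_mul, Matrix.mul_assoc, hU, Matrix.mul_one, sub_self]
    have := congrFun h6 j
    rw [Matrix.mul_apply_eq_vecMul] at this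
    exact this
  have h7 : z ⬝ᵥ (A *ᵥ Nᵀ j) = q⁻¹ * sampleExp π m (fun ω => (1 - illInd (sGram U c ω)) *
        ∑ s, c (ω s) * Nᵀ j (ω s) * (U (ω s) ⬝ᵥ ((sGram U c ω)⁻¹ *ᵥ z))) := by
    rw [← sum_goodEvent, hA, Matrix.smul_mulVec, dotProduct_smul, smul_eq_mul, Matrix.sum_mulVec,
      dotProduct_sum]
    congr 1
    refine Finset.sum_congr rfl fun ω _ => ?_
    rw [Matrix.smul_mulVec, dotProduct_smul, smul_eq_mul]
    congr 1
    simp only [hK]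
    rw [← mulVec_mulVec, debCross_mulVec hm hπ hl hc, dotProduct_mulVec, ← mulVec_transpose,
      transpose_nonsing_inv, sGram_transpose, dotProduct_sum]
    refine Finset.sum_congr rfl fun s _ => ?_
    rw [dotProduct_smul, smul_eq_mul, dotProduct_comm]
  rw [h7, mul_pow]
  have h8 : q⁻¹ ^ 2 ≤ 2 ^ 2 := by
    refine pow_le_pow_left₀ (by positivity) ?_ 2
    rw [inv_le_comm₀ (by linarith) (by norm_num)]; linarith
  have h9 := mul_le_mul h8 (hform _ z hν) (sq_nonneg _) (by norm_num)
  refine h9.trans (le_of_eq (by ring))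

/-! ### Conclusion -/

/-- **Bias of the debiased oblique projection** (Theorem 3.2, first moment):
there are absolute constants `C, C' > 0` such that, under the row-norm
condition with exponent `α`, for `0 < δ ≤ n^{−(3+α)}` and
`m ≥ C θ_max(X) p log(p/δ)`, there is an event `ζ` of probability at least
`1 − δ` on which the debiased sketched Gram matrices are invertible and
`‖E_ζ[P̌] − P‖_F ≤ ε ‖P⊥‖_F` with
`ε = C' (log n/log log n) √(θ_max(X)³ p³/m³)`. -/
theorem debiased_oblique_projection_bias :
    ∃ C C' : ℝ, 0 < C ∧ 0 < C' ∧
      ∀ (n p m : ℕ) (X : Matrix (Fin n) (Fin p) ℝ) (π : Fin n → ℝ) (α : ℝ),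
        1 ≤ p → p ≤ n → 3 ≤ n →
        IsUnit (Xᵀ * X).det →
        0 < α →
        (∀ i, X i ≠ 0 → (n : ℝ) ^ (-α) ≤ (X i ⬝ᵥ X i) / frobNorm X ^ 2) →
        (∀ i, 0 < π i) → (∑ i, π i = 1) →
        (∀ i, lev X i < m * π i) →
        ∀ δ : ℝ, 0 < δ → δ ≤ (n : ℝ) ^ (-(3 + α)) →
        C * thetaMax X π * p * Real.log (p / δ) ≤ m →
        ∃ ζ : Finset (Fin m → Fin n),
          1 - δ ≤ eventProb (samplingP π) ζ ∧
          (∀ ω ∈ ζ,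
            IsUnit ((samplingSdeb X π ω * X)ᵀ * (samplingSdeb X π ω * X)).det) ∧
          frobNorm (condExp (samplingP π) ζ (projDeb X π) - projX X)
            ≤ (C' * (Real.log n / Real.log (Real.log n)) *
                Real.sqrt (thetaMax X π ^ 3 * p ^ 3 / m ^ 3)) *
              frobNorm (1 - projX X) := by
  refine ⟨48, 12000, by norm_num, by norm_num, ?_⟩
  intro n p m X π α hp hpn hn hX hα _ hπ hπ1 hl δ hδ hδn hm
  obtain ⟨U, R, hU, hR, hXU⟩ := exists_orthonormal_factor hX
  have hlev := lev_eq hU hR hXU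
  have hp0 : (0 : ℝ) < p := by exact_mod_cast hp
  have hp1 : (1 : ℝ) ≤ p := by exact_mod_cast hp
  have hn3 : (3 : ℝ) ≤ n := by exact_mod_cast hn
  set K := thetaMax X π * p with hK
  have hlK : ∀ i, lev X i ≤ K * π i := fun i => by
    have h1 : lev X i / (p * π i) ≤ thetaMax X π :=
      le_ciSup (f := fun i => lev X i / (p * π i)) (Set.finite_range _).bddAbove i
    rw [div_le_iff₀ (mul_pos hp0 (hπ i))] at h1
    rw [hK, mul_assoc]; exact h1
  have hKp : (p : ℝ) ≤ K := by
    have h1 : ∑ i, lev X i = p := by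
      have h2 := trace_transpose_mul_self Uᵀ
      rw [transpose_transpose, trace_mul_comm, hU, trace_one, Fintype.card_fin] at h2
      rw [h2]; exact Finset.sum_congr rfl fun i _ => hlev i
    rw [← h1, ← mul_one K, ← hπ1, Finset.mul_sum]
    exact Finset.sum_le_sum fun i _ => hlK i
  have hlogn : 1 < Real.log n := by
    rw [Real.lt_log_iff_exp_lt (by linarith)]
    linarith [Real.exp_one_lt_d9]
  -- `L = log (p / δ) ≥ 3`
  have hδe : δ ≤ Real.exp (-3) := by
    refine hδn.trans ?_
    rw [Real.rpow_def_of_pos (by linarith)]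
    exact Real.exp_le_exp.2 (by nlinarith)
  set L := Real.log (p / δ) with hL
  have hexpL : p * Real.exp (-L) = δ := by
    rw [hL, Real.exp_neg, Real.exp_log (by positivity)]; field_simp
  have hL3 : 3 ≤ L := by
    rw [hL, Real.le_log_iff_exp_le (by positivity), le_div_iff₀ hδ]
    have h1 := mul_le_mul_of_nonneg_left hδe (Real.exp_pos 3).le
    rw [← Real.exp_add, add_neg_cancel, Real.exp_zero] at h1
    linarith
  have hm0 : 0 < (m : ℝ) := by nlinarith
  obtain ⟨k, rfl⟩ : ∃ k, m = k + 1 := Nat.exists_eq_succ_of_ne_zero (by rintro rfl; simp at hm0)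
  set r := K / ((k + 1 : ℕ) : ℝ) with hr
  have hrm : r * ((k : ℝ) + 1) = K := by rw [hr]; push_cast; field_simp
  have hr0 : 0 < r := div_pos (by linarith) hm0
  have hrL : 48 * r * L ≤ 1 := by
    have h1 : 48 * K * L / ((k + 1 : ℕ) : ℝ) ≤ 1 := by
      rw [div_le_one hm0, hK, ← mul_assoc]; exact hm
    calc 48 * r * L = 48 * K * L / ((k + 1 : ℕ) : ℝ) := by rw [hr]; ring
      _ ≤ 1 := h1
  have hr144 : r ≤ 1 / 144 := by nlinarith
  set c : Fin n → ℝ := fun i => (((k + 1 : ℕ) : ℝ) * π i - lev X i)⁻¹ with hc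
  have D : DebiasedData U π c k r :=
    { orth := hU
      pos := hπ
      sum_one := hπ1
      lev_le := fun i => by rw [← hlev, ← mul_assoc, hrm]; exact hlK i
      weight := fun i => by rw [hc, ← hlev]; push_cast; rfl
      r_pos := hr0
      r_le := by linarith
      inv_le := by rw [hrm]; linarith }
  set y := 1 / (48 * r) with hy
  have hyr : 48 * r * y = 1 := by rw [hy]; field_simp
  have hyL : L ≤ y := by
    rw [hy, le_div_iff₀ (by positivity)]; linarith
  -- the scale `t = 1 / (2 r) = 24 y` keeps every rank-one increment of norm at most one
  have ill : ∀ k' : ℕ, 1 / 2 ≤ (1 / ((k : ℝ) + 1)) * k' →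
      sampleExp π k' (fun ω => illInd (sGram U c ω)) ≤ δ * Real.exp (-y) := fun k' hk' => by
    have h1 := sampleExp_illInd_le (t := 24 * y) (b := 1 / ((k : ℝ) + 1)) hπ hπ1 hU
      (by positivity) (fun i => (D.weight_pos i).le)
      (fun i => by
        rw [div_le_iff₀ D.m_pos]; linarith [D.one_le i])
      (fun i => by
        have h2 := mul_le_mul_of_nonneg_left (D.weight_lev i) (by positivity : 0 ≤ 24 * y)
        linarith)
      (by
        have h3 := D.inv_le
        have hM := D.m_pos
        rw [mul_one_div, div_div, div_le_one (by positivity)]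
        have h4 := mul_le_mul_of_nonneg_left h3 (by positivity : 0 ≤ 24 * y)
        have h5 : 24 * y * (r * ((k : ℝ) + 1)) = ((k : ℝ) + 1) / 2 := by
          linear_combination (((k : ℝ) + 1) / 2) * hyr
        linarith) k' hk'
    refine h1.trans ?_
    have h6 : Real.exp (-(24 * y / 12)) = Real.exp (-y) * Real.exp (-y) := by
      rw [← Real.exp_add]; ring_nf
    have h7 : Real.exp (-y) ≤ Real.exp (-L) := Real.exp_le_exp.2 (by linarith)
    rw [h6, ← hexpL, mul_assoc]
    gcongr
  have hexpy : Real.exp (-y) ≤ 1 := Real.exp_le_one_iff.2 (by linarith)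
  have hM144 : (144 : ℝ) ≤ (k : ℝ) + 1 := by nlinarith [D.inv_le]
  have hδ1 : δ ≤ 1 / 2 := by
    refine hδe.trans ?_
    rw [Real.exp_neg, inv_le_comm₀ (Real.exp_pos _) (by norm_num)]
    linarith [Real.add_one_le_exp (3 : ℝ)]
  have hprob : 1 - δ ≤ eventProb (samplingP π) (goodEvent U c (k + 1)) := by
    have h1 := ill (k + 1) (by
      have := D.m_pos
      push_cast; rw [one_div_mul_cancel this.ne']; norm_num)
    have h2 := sum_goodEvent (k := k + 1) U c π (fun _ => 1)
    simp only [mul_one] at h2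
    have h3 : sampleExp π (k + 1) (fun ω => 1 - illInd (sGram U c ω))
        = 1 - sampleExp π (k + 1) (fun ω => illInd (sGram U c ω)) := by
      have h4 : ∑ ω : Fin (k + 1) → Fin n, samplingP π ω * 1 = 1 := sampleExp_one hπ1 (k + 1)
      simp only [sampleExp, mul_sub, Finset.sum_sub_distrib, h4]
    rw [eventProb, h2, h3]
    nlinarith
  refine ⟨goodEvent U c (k + 1), hprob, fun ω hω => ?_, ?_⟩
  · have hG : WellCond (sGram U c ω) := by simpa [goodEvent] using hω
    have h1 : (samplingSdeb X π ω * X)ᵀ * (samplingSdeb X π ω * X)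
        = Rᵀ * ((samplingSdeb X π ω * U)ᵀ * (samplingSdeb X π ω * U)) * R := by
      nth_rewrite 2 4 [hXU]
      simp only [transpose_mul, Matrix.mul_assoc]
    rw [h1, debGram_eq hm0 hπ hl (fun i => rfl), det_mul, det_mul, det_transpose]
    exact (hR.mul ((Matrix.isUnit_iff_isUnit_det _).1 hG.isUnit)).mul hR
  · have hη : sampleExp π k (fun ω => illInd (sGram U c ω)) ≤ 663552 * r ^ 3 := by
      refine (ill k (by
        rw [one_div_mul_eq_div, le_div_iff₀ D.m_pos]; linarith)).trans ?_
      have hy0 : 0 < y := by linarith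
      -- `exp(-y) ≤ 6 / y³` with `y = 1 / (48 r)`, and `6 * 48³ = 663552`
      have h1 := Real.pow_div_factorial_le_exp y hy0.le 3
      have h2 : Real.exp (-y) ≤ 663552 * r ^ 3 := by
        rw [Real.exp_neg, inv_le_comm₀ (Real.exp_pos _) (by positivity)]
        refine le_trans (le_of_eq ?_) h1
        rw [hy]; simp [Nat.factorial]; field_simp; norm_num
      nlinarith [Real.exp_pos (-y)]
    -- `6000² ≥ 48 * 663552 + 2000000`
    have hb := bias_bound (B := 6000 * Real.sqrt (r ^ 3)) hU hR hXU hm0 hπ hl (fun i => rfl)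
      (by positivity) (by linarith) (fun ν z hν => by
        refine (D.bias_form hν z).trans (mul_le_mul_of_nonneg_right ?_
          (mul_nonneg (dotProduct_self_nonneg' _) (dotProduct_self_nonneg' _)))
        rw [mul_pow, Real.sq_sqrt (by positivity)]
        have : 0 ≤ r ^ 3 := by positivity
        linarith)
    refine hb.trans (mul_le_mul_of_nonneg_right ?_ (Real.sqrt_nonneg _))
    have hr3 : thetaMax X π ^ 3 * (p : ℝ) ^ 3 / ((k + 1 : ℕ) : ℝ) ^ 3 = r ^ 3 := by
      rw [hr, hK, div_pow, mul_pow]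
    rw [hr3]
    have hll : 0 < Real.log (Real.log n) := Real.log_pos hlogn
    have h1 : 1 ≤ Real.log n / Real.log (Real.log n) := by
      rw [one_le_div hll]
      linarith [Real.log_le_sub_one_of_pos (by linarith : 0 < Real.log n)]
    have h5 := mul_le_mul_of_nonneg_right h1 (Real.sqrt_nonneg (r ^ 3))
    calc 2 * (6000 * Real.sqrt (r ^ 3)) = 12000 * (1 * Real.sqrt (r ^ 3)) := by ring
      _ ≤ 12000 * (Real.log n / Real.log (Real.log n) * Real.sqrt (r ^ 3)) :=
        mul_le_mul_of_nonneg_left h5 (by norm_num)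
      _ = 12000 * (Real.log n / Real.log (Real.log n)) * Real.sqrt (r ^ 3) :=
        (mul_assoc _ _ _).symm

end
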